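/- arXiv:2402.14676 — 3 statements merged into one kernel-verified Lean document; each statement's English description precedes it below -/
import Mathlib

section
/- (Theorem 1, via the greedy realization of the optimal expected score.) As n → ∞, the expected final score of the unrestricted player satisfies E[S_n^gr] ~ √(27n/(4π)) = (3√3/(2√π))·√n; that is, E[S_n^gr]/√n → 3√3/(2√π). -/
open MeasureTheory ProbabilityTheory Real Filter
open scoped ENNReal Topology

namespace RPSGreedy

/-- Standard basis vector `e i` of `Fin 3 → ℕ`. -/
def e (i : Fin 3) : Fin 3 → ℕ := fun j => if j = i then 1 else 0

/-- One-step transition probabilities of the greedy game process. -/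
noncomputable def stepProb (n : ℕ) (p q : (Fin 3 → ℕ) × ℤ) : ℝ≥0∞ :=
  let k := (Finset.univ.filter fun i => p.1 i = n).card
  if k = 0 then
    (if (∃ i : Fin 3, q.1 = p.1 + e i) ∧ (q.2 = p.2 - 1 ∨ q.2 = p.2 ∨ q.2 = p.2 + 1)
      then 1/9 else 0)
  else if k = 1 then
    ∑ c : Fin 3, (if p.1 c = n then
      (if q.1 = p.1 + e (c+1) ∧ q.2 = p.2 + 1 then 2/9
       else if q.1 = p.1 + e (c+1) ∧ q.2 = p.2 - 1 then 1/9
       else if q.1 = p.1 + e (c+2) ∧ q.2 = p.2 then 4/9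
       else if q.1 = p.1 + e (c+2) ∧ q.2 = p.2 + 1 then 2/9
       else 0)
      else 0)
  else if k = 2 then
    (if ∃ i : Fin 3, p.1 i < n ∧ q.1 = p.1 + e i ∧ q.2 = p.2 + 1 then 1 else 0)
  else 0

/-- The greedy game process over `3n` rounds: initial state and Markov transitions. -/
def IsGreedyProcess (n : ℕ) {Ω : Type*} [MeasurableSpace Ω] (μ : Measure Ω)
    (NS : ℕ → Ω → (Fin 3 → ℕ) × ℤ) : Prop :=
  IsProbabilityMeasure μ ∧
  (∀ t, Measurable (NS t)) ∧
  μ {ω | NS 0 ω = (fun _ => 0, 0)} = 1 ∧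
  (∀ t, t < 3 * n → ∀ f : ℕ → (Fin 3 → ℕ) × ℤ,
    μ {ω | ∀ u ≤ t + 1, NS u ω = f u}
      = stepProb n (f t) (f (t + 1)) * μ {ω | ∀ u ≤ t, NS u ω = f u})

set_option linter.unusedSimpArgs false

noncomputable def ff (a b c : ℝ) : ℝ := max (max (a - b) (b - c)) (c - a)

noncomputable def HH : ℕ → ℝ → ℝ → ℝ → ℝ
  | 0, a, b, c => ff a b c
  | m + 1, a, b, c => (HH m (a + 1) b c + HH m a (b + 1) c + HH m a b (c + 1)) / 3

noncomputable def DD (a b c : ℝ) : ℝ := (a - b) ^ 2 + (b - c) ^ 2 + (c - a) ^ 2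

noncomputable def GG : ℕ → ℝ → ℝ
  | 0, z => |z|
  | m + 1, z => (2 * GG m (z + 1) + GG m (z - 2)) / 3

lemma HH_cyc (m : ℕ) : ∀ a b c, HH m b c a = HH m a b c := by
  induction m with
  | zero => intro a b c; simp only [HH, ff]; rw [max_comm, max_assoc]
  | succ m ih =>
    intro a b c
    simp only [HH]
    rw [ih (a + 1) b c, ih a (b + 1) c, ih a b (c + 1)]; ring

lemma ff_le_HH (m : ℕ) : ∀ a b c, ff a b c ≤ HH m a b c := by
  induction m with
  | zero => intro a b c; simp [HH]
  | succ m ih =>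
    intro a b c
    simp only [HH]
    have h1 := ih (a + 1) b c
    have h2 := ih a (b + 1) c
    have h3 := ih a b (c + 1)
    have h : 3 * ff a b c ≤ ff (a + 1) b c + ff a (b + 1) c + ff a b (c + 1) := by
      have k : ∀ a b c : ℝ, a - b ≤ ff a b c ∧ b - c ≤ ff a b c ∧ c - a ≤ ff a b c := by
        intro a b c; unfold ff; simp
      obtain ⟨p1, p2, p3⟩ := k (a + 1) b c
      obtain ⟨q1, q2, q3⟩ := k a (b + 1) c
      obtain ⟨r1, r2, r3⟩ := k a b (c + 1)
      have : ff a b c ≤ (ff (a + 1) b c + ff a (b + 1) c + ff a b (c + 1)) / 3 := by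
        rw [ff]
        refine max_le (max_le ?_ ?_) ?_ <;> linarith
      linarith
    linarith

lemma HH_add (m : ℕ) : ∀ a b c a₁ b₁ c₁,
    HH m (a + a₁) (b + b₁) (c + c₁) ≤ ff a b c + HH m a₁ b₁ c₁ := by
  induction m with
  | zero =>
    intro a b c a₁ b₁ c₁
    simp only [HH]
    have k : ∀ a b c : ℝ, a - b ≤ ff a b c ∧ b - c ≤ ff a b c ∧ c - a ≤ ff a b c := by
      intro a b c; unfold ff; simp
    obtain ⟨p1, p2, p3⟩ := k a b c
    obtain ⟨q1, q2, q3⟩ := k a₁ b₁ c₁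
    rw [show ff (a + a₁) (b + b₁) (c + c₁) = max (max (a + a₁ - (b + b₁)) (b + b₁ - (c + c₁))) (c + c₁ - (a + a₁)) from rfl]
    refine max_le (max_le ?_ ?_) ?_ <;> linarith
  | succ m ih =>
    intro a b c a₁ b₁ c₁
    simp only [HH]
    have h1 := ih a b c (a₁ + 1) b₁ c₁
    have h2 := ih a b c a₁ (b₁ + 1) c₁
    have h3 := ih a b c a₁ b₁ (c₁ + 1)
    simp only [← add_assoc] at h1 h2 h3
    linarith

lemma HH_sq (m : ℕ) : ∀ a b c, HH m a b c ^ 2 ≤ DD a b c + 2 * m := by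
  induction m with
  | zero =>
    intro a b c
    simp only [HH, ff, DD]
    rcases max_cases (max (a - b) (b - c)) (c - a) with ⟨h, _⟩ | ⟨h, _⟩ <;> rw [h]
    · rcases max_cases (a - b) (b - c) with ⟨h, _⟩ | ⟨h, _⟩ <;> rw [h] <;> norm_num <;>
        nlinarith [sq_nonneg (a - b), sq_nonneg (b - c), sq_nonneg (c - a)]
    · norm_num; nlinarith [sq_nonneg (a - b), sq_nonneg (b - c)]
  | succ m ih =>
    intro a b c
    simp only [HH]
    have h1 := ih (a + 1) b c
    have h2 := ih a (b + 1) c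
    have h3 := ih a b (c + 1)
    simp only [DD] at *
    set x := HH m (a + 1) b c
    set y := HH m a (b + 1) c
    set z := HH m a b (c + 1)
    push_cast
    nlinarith [sq_nonneg (x - y), sq_nonneg (y - z), sq_nonneg (x - z)]

lemma HH_le (m : ℕ) (a b c : ℝ) : HH m a b c ≤ ff a b c + √(2 * m) := by
  have h := HH_add m a b c 0 0 0
  have h2 := HH_sq m 0 0 0
  simp only [add_zero] at h
  have : HH m 0 0 0 ≤ √(2 * m) := Real.le_sqrt_of_sq_le (by simpa [DD] using h2)
  linarith

set_option maxHeartbeats 2000000 in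
lemma HH_symm (m : ℕ) : ∀ a b c, HH m a b c + HH m b a c =
    (GG m (a + b - 2 * c) + GG m (b + c - 2 * a) + GG m (c + a - 2 * b)) / 2 := by
  induction m with
  | zero =>
    intro a b c
    simp only [HH, GG, ff]
    rcases abs_cases (a + b - 2 * c) with ⟨e1, _⟩ | ⟨e1, _⟩ <;>
    rcases abs_cases (b + c - 2 * a) with ⟨e2, _⟩ | ⟨e2, _⟩ <;>
    rcases abs_cases (c + a - 2 * b) with ⟨e3, _⟩ | ⟨e3, _⟩ <;>
    rw [e1, e2, e3] <;>
    rcases max_cases (max (a - b) (b - c)) (c - a) with ⟨e4, _⟩ | ⟨e4, _⟩ <;>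
    rcases max_cases (max (b - a) (a - c)) (c - b) with ⟨e5, _⟩ | ⟨e5, _⟩ <;>
    rcases max_cases (a - b) (b - c) with ⟨e6, _⟩ | ⟨e6, _⟩ <;>
    rcases max_cases (b - a) (a - c) with ⟨e7, _⟩ | ⟨e7, _⟩ <;>
    linarith
  | succ m ih =>
    intro a b c
    simp only [HH, GG]
    have h1 := ih (a + 1) b c
    have h2 := ih a (b + 1) c
    have h3 := ih a b (c + 1)
    rw [show a + 1 + b - 2 * c = a + b - 2 * c + 1 by ring,
      show b + c - 2 * (a + 1) = b + c - 2 * a - 2 by ring,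
      show c + (a + 1) - 2 * b = c + a - 2 * b + 1 by ring] at h1
    rw [show a + (b + 1) - 2 * c = a + b - 2 * c + 1 by ring,
      show b + 1 + c - 2 * a = b + c - 2 * a + 1 by ring,
      show c + a - 2 * (b + 1) = c + a - 2 * b - 2 by ring] at h2
    rw [show a + b - 2 * (c + 1) = a + b - 2 * c - 2 by ring,
      show b + (c + 1) - 2 * a = b + c - 2 * a + 1 by ring,
      show c + 1 + a - 2 * b = c + a - 2 * b + 1 by ring] at h3
    linarith

lemma HH_zero (m : ℕ) : HH m 0 0 0 = 3 / 4 * GG m 0 := by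
  have := HH_symm m 0 0 0
  norm_num at this
  linarith

lemma GG_eq (m : ℕ) : ∀ z, 3 ^ m * GG m z =
    ∑ k ∈ Finset.range (m + 1), (m.choose k : ℝ) * (2 ^ (m - k) * |z + m - 3 * k|) := by
  induction m with
  | zero => intro z; simp [GG]
  | succ m ih =>
    intro z
    have h := Finset.sum_choose_succ_mul (R := ℝ) (fun k j => 2 ^ j * |z + (m + 1 : ℕ) - 3 * k|) m
    rw [h]
    have h1 := ih (z + 1)
    have h2 := ih (z - 2)
    rw [pow_succ, GG]
    have : (3:ℝ) ^ m * 3 * ((2 * GG m (z + 1) + GG m (z - 2)) / 3) =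
      2 * (3 ^ m * GG m (z + 1)) + 3 ^ m * GG m (z - 2) := by ring
    rw [this, h1, h2, Finset.mul_sum]
    congr 1
    · apply Finset.sum_congr rfl
      intro k hk
      have : k ≤ m := by simp at hk; omega
      rw [show m + 1 - k = m - k + 1 by omega, pow_succ]
      push_cast
      rw [show z + 1 + (m:ℝ) = z + (m + 1) by ring]; ring
    · apply Finset.sum_congr rfl
      intro k hk
      push_cast
      rw [show z - 2 + (m:ℝ) - 3 * k = z + (m + 1) - 3 * (k + 1) by ring]

lemma tele (m : ℕ) : ∀ j ≤ m, ∑ k ∈ Finset.range j, (m.choose k : ℝ) * (2 ^ (m - k) * (m - 3 * k)) =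
    2 * j * (m.choose j : ℝ) * 2 ^ (m - j) := by
  intro j
  induction j with
  | zero => simp
  | succ j ih =>
    intro hj
    rw [Finset.sum_range_succ, ih (by omega)]
    have h : (m.choose (j + 1) : ℝ) * (j + 1) = m.choose j * (m - j) := by
      have := Nat.choose_succ_right_eq m j
      have h2 : (((m.choose (j+1) * (j+1) : ℕ)) : ℝ) = ((m.choose j * (m - j) : ℕ) : ℝ) := by rw [this]
      push_cast [Nat.cast_sub (show j ≤ m by omega)] at h2
      exact h2
    rw [show m - j = m - (j + 1) + 1 by omega, pow_succ]
    push_cast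
    linear_combination (-2 * 2 ^ (m - (j + 1))) * h

lemma GG_three (n : ℕ) : 3 ^ (3 * n) * GG (3 * n) 0 = 4 * n * ((3 * n).choose n : ℝ) * 2 ^ (2 * n) := by
  rw [GG_eq]
  have hz : ∑ k ∈ Finset.range (3 * n + 1), ((3*n).choose k : ℝ) * (2 ^ (3*n - k) * (((3 * n : ℕ) : ℝ) - 3 * k)) = 0 := by
    rw [Finset.sum_range_succ, tele _ _ le_rfl]
    simp; ring
  have ht := tele (3 * n) n (by omega)
  have hs : ∀ g : ℕ → ℝ, ∑ k ∈ Finset.range (3 * n + 1), g k =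
      ∑ k ∈ Finset.range n, g k + ∑ k ∈ Finset.Ico n (3 * n + 1), g k := by
    intro g
    exact (Finset.sum_range_add_sum_Ico _ (by omega)).symm
  rw [hs] at hz ⊢
  have e1 : ∑ k ∈ Finset.range n, ((3*n).choose k : ℝ) * (2 ^ (3*n - k) * |0 + ((3 * n : ℕ) : ℝ) - 3 * k|) =
     ∑ k ∈ Finset.range n, ((3*n).choose k : ℝ) * (2 ^ (3*n - k) * (((3 * n : ℕ) : ℝ) - 3 * k)) := by
    apply Finset.sum_congr rfl
    intro k hk
    have : (k : ℝ) ≤ n := by simp at hk; exact_mod_cast hk.le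
    rw [zero_add, abs_of_nonneg (by push_cast; linarith)]
  have e2 : ∑ k ∈ Finset.Ico n (3 * n + 1), ((3*n).choose k : ℝ) * (2 ^ (3*n - k) * |0 + ((3 * n : ℕ) : ℝ) - 3 * k|) =
     - ∑ k ∈ Finset.Ico n (3 * n + 1), ((3*n).choose k : ℝ) * (2 ^ (3*n - k) * (((3 * n : ℕ) : ℝ) - 3 * k)) := by
    rw [← Finset.sum_neg_distrib]
    apply Finset.sum_congr rfl
    intro k hk
    have : (n : ℝ) ≤ k := by simp at hk; exact_mod_cast hk.1
    rw [zero_add, abs_of_nonpos (by push_cast; linarith)]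
    ring
  rw [e1, e2]
  rw [show 3 * n - n = 2 * n by omega] at ht
  linarith

noncomputable def LL (n : ℕ) : ℝ := 3 * n * ((3 * n).choose n : ℝ) * 4 ^ n / 27 ^ n

lemma HH_three (n : ℕ) : HH (3 * n) 0 0 0 = LL n := by
  have h := GG_three n
  rw [HH_zero, LL]
  rw [pow_mul, pow_mul] at h
  norm_num at h
  field_simp
  linarith

lemma LL_tendsto : Tendsto (fun n : ℕ => LL n / √n) atTop (𝓝 (3 * √3 / (2 * √π))) := by
  have hS := Stirling.tendsto_stirlingSeq_sqrt_pi
  have t1 : Tendsto (fun n : ℕ => Stirling.stirlingSeq (3 * n)) atTop (𝓝 √π) :=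
    hS.comp (tendsto_id.const_mul_atTop' (by norm_num))
  have t2 : Tendsto (fun n : ℕ => Stirling.stirlingSeq (2 * n)) atTop (𝓝 √π) :=
    hS.comp (tendsto_id.const_mul_atTop' (by norm_num))
  have hp : √π ≠ 0 := by positivity
  have t := (t1.div (hS.mul t2) (by positivity)).const_mul (3 * √3 / 2)
  have e : 3 * √3 / 2 * (√π / (√π * √π)) = 3 * √3 / (2 * √π) := by field_simp
  rw [e] at t
  refine t.congr' ?_
  filter_upwards [eventually_ge_atTop 1] with n hn
  have hnpos : (0:ℝ) < n := by exact_mod_cast hn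
  have hc : ((3 * n).choose n : ℝ) = (3 * n).factorial / (n.factorial * (2 * n).factorial) := by
    rw [Nat.cast_choose ℝ (by omega), show 3 * n - n = 2 * n by omega]
  have hs : ∀ k : ℕ, (k:ℝ) * n = √(k * n) ^ 2 := by intro k; rw [Real.sq_sqrt (by positivity)]
  simp only [Stirling.stirlingSeq, LL, hc, Pi.div_apply]
  push_cast
  have q1 : √(2 * (3 * (n:ℝ))) = √2 * √3 * √n := by
    rw [Real.sqrt_mul (by norm_num), Real.sqrt_mul (by norm_num)]; ring
  have q2 : √(2 * (2 * (n:ℝ))) = 2 * √n := by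
    rw [← mul_assoc, Real.sqrt_mul (by norm_num), show (2:ℝ) * 2 = 2 ^ 2 by norm_num, Real.sqrt_sq (by norm_num)]
  have q3 : √(2 * (n:ℝ)) = √2 * √n := by
    rw [Real.sqrt_mul (by norm_num)]
  rw [q1, q2, q3]
  have r1 : (3 * (n:ℝ) / rexp 1) ^ (3 * n) = 27 ^ n * ((n / rexp 1) ^ n) ^ 3 := by
    rw [mul_div_assoc, mul_pow, pow_mul, ← pow_mul _ n 3, mul_comm n 3]; norm_num
  have r2 : (2 * (n:ℝ) / rexp 1) ^ (2 * n) = 4 ^ n * ((n / rexp 1) ^ n) ^ 2 := by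
    rw [mul_div_assoc, mul_pow, pow_mul, ← pow_mul _ n 2, mul_comm n 2]; norm_num
  rw [r1, r2]
  have hu : 0 < ((n:ℝ) / rexp 1) ^ n := by positivity
  set u := ((n:ℝ) / rexp 1) ^ n
  have hsn : √(n:ℝ) ^ 2 = n := Real.sq_sqrt hnpos.le
  have hsp : 0 < √(n:ℝ) := by positivity
  set s := √(n:ℝ)
  rw [← hsn]
  field_simp

noncomputable def VV (n : ℕ) : ℕ → (Fin 3 → ℕ) → ℝ
  | 0, _ => 0
  | m + 1, N =>
    if (Finset.univ.filter fun i => N i = n).card = 0 then (∑ i, VV n m (N + e i)) / 3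
    else if (Finset.univ.filter fun i => N i = n).card = 1 then
      ∑ c, if N c = n then 1 / 3 + 1 / 3 * VV n m (N + e (c + 1)) + 2 / 3 * VV n m (N + e (c + 2))
        else 0
    else 1 + ∑ i, if N i < n then VV n m (N + e i) else 0

lemma fin3a : ∀ c : Fin 3, c + 1 ≠ c ∧ c + 2 ≠ c ∧ c + 1 ≠ c + 2 ∧ c ≠ c + 1 ∧ c ≠ c + 2 ∧
    c + 2 ≠ c + 1 := by decide

lemma fin3b : ∀ c : Fin 3, c + 1 + 1 = c + 2 ∧ c + 1 + 2 = c ∧ c + 2 + 1 = c ∧ c + 2 + 2 = c + 1 := by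
  decide

lemma sum3 {M : Type*} [AddCommMonoid M] (g : Fin 3 → M) (c : Fin 3) :
    ∑ i, g i = g c + g (c + 1) + g (c + 2) := by
  rw [Fin.sum_univ_three]
  fin_cases c
  · rfl
  · show g 0 + g 1 + g 2 = g 1 + g 2 + g 0
    abel
  · show g 0 + g 1 + g 2 = g 2 + g 0 + g 1
    abel

lemma all3 {P : Fin 3 → Prop} (c : Fin 3) (h0 : P c) (h1 : P (c + 1)) (h2 : P (c + 2)) : ∀ i, P i := by
  have : ∀ c i : Fin 3, i = c ∨ i = c + 1 ∨ i = c + 2 := by decide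
  intro i
  rcases this c i with h | h | h <;> rw [h] <;> assumption

lemma e_apply (N : Fin 3 → ℕ) (i j : Fin 3) : (N + e i) j = N j + if j = i then 1 else 0 := rfl

lemma card0 {n : ℕ} {N : Fin 3 → ℕ} (h : ∀ i, N i < n) :
    (Finset.univ.filter fun i => N i = n).card = 0 := by
  rw [Finset.card_filter, sum3 _ 0]
  simp [(h _).ne]

lemma card1 {n : ℕ} {N : Fin 3 → ℕ} (c : Fin 3) (h0 : N c = n) (h1 : N (c + 1) < n)
    (h2 : N (c + 2) < n) : (Finset.univ.filter fun i => N i = n).card = 1 := by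
  rw [Finset.card_filter, sum3 _ c]
  simp [h0, h1.ne, h2.ne]

lemma card2 {n : ℕ} {N : Fin 3 → ℕ} (c : Fin 3) (h0 : N c < n) (h1 : N (c + 1) = n)
    (h2 : N (c + 2) = n) : (Finset.univ.filter fun i => N i = n).card = 2 := by
  rw [Finset.card_filter, sum3 _ c]
  simp [h0.ne, h1, h2]

lemma VV_0 {n m : ℕ} {N : Fin 3 → ℕ} (h : ∀ i, N i < n) (c : Fin 3) :
    VV n (m + 1) N = (VV n m (N + e c) + VV n m (N + e (c + 1)) + VV n m (N + e (c + 2))) / 3 := by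
  rw [VV, card0 h, if_pos rfl, sum3 _ c]

lemma VV_1 {n m : ℕ} {N : Fin 3 → ℕ} (c : Fin 3) (h0 : N c = n) (h1 : N (c + 1) < n)
    (h2 : N (c + 2) < n) :
    VV n (m + 1) N = 1 / 3 + 1 / 3 * VV n m (N + e (c + 1)) + 2 / 3 * VV n m (N + e (c + 2)) := by
  rw [VV, card1 c h0 h1 h2, if_neg (by norm_num), if_pos rfl, sum3 _ c]
  simp [h0, h1.ne, h2.ne]

lemma VV_2 {n m : ℕ} {N : Fin 3 → ℕ} (c : Fin 3) (h0 : N c < n) (h1 : N (c + 1) = n)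
    (h2 : N (c + 2) = n) :
    VV n (m + 1) N = 1 + VV n m (N + e c) := by
  rw [VV, card2 c h0 h1 h2, if_neg (by norm_num), if_neg (by norm_num), sum3 _ c]
  simp [h0, h1, h2]

lemma phase3 (n m : ℕ) : ∀ (N : Fin 3 → ℕ) (c : Fin 3), N c + m = n → N (c + 1) = n →
    N (c + 2) = n → VV n m N = m := by
  induction m with
  | zero => intro N c _ _ _; simp [VV]
  | succ m ih =>
    intro N c h0 h1 h2
    obtain ⟨a1, a2, a3, a4, a5, a6⟩ := fin3a c
    rw [VV_2 c (by omega) h1 h2, ih (N + e c) c]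
    · push_cast; ring
    · rw [e_apply]; simp; omega
    · rw [e_apply]; simp [a1, h1]
    · rw [e_apply]; simp [a2, h2]

lemma phase2 (n m : ℕ) : ∀ (N : Fin 3 → ℕ) (c : Fin 3), N c = n → N (c + 1) ≤ n →
    N (c + 2) ≤ n → N (c + 1) + N (c + 2) + m = 2 * n →
    |((n : ℝ) - N (c + 1)) - (n - N (c + 2)) / 2| ≤ VV n m N - (n - N (c + 2)) / 2 ∧
    (VV n m N - (n - N (c + 2)) / 2) ^ 2 ≤ (((n : ℝ) - N (c + 1)) - (n - N (c + 2)) / 2) ^ 2 + m / 2 := by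
  induction m with
  | zero =>
    intro N c h0 h1 h2 h3
    have e1 : N (c + 1) = n := by omega
    have e2 : N (c + 2) = n := by omega
    simp [VV, e1, e2]
  | succ m ih =>
    intro N c h0 h1 h2 h3
    obtain ⟨a1, a2, a3, a4, a5, a6⟩ := fin3a c
    obtain ⟨b1, b2, b3, b4⟩ := fin3b c
    have hr : (N (c + 1) : ℝ) + N (c + 2) + (m + 1) = 2 * n := by exact_mod_cast h3
    rcases h1.eq_or_lt with h1 | h1
    · have hv := phase3 n (m + 1) N (c + 2) (by omega) (by rw [b3, h0]) (by rw [b4, h1])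
      rw [hv, h1]
      rw [h1] at hr
      push_cast
      have : (N (c + 2) : ℝ) = n - (m + 1) := by linarith
      rw [this]
      have hm : (0:ℝ) ≤ m := by positivity
      constructor
      · rw [abs_of_nonpos (by linarith)]; linarith
      · nlinarith
    rcases h2.eq_or_lt with h2 | h2
    · have hv := phase3 n (m + 1) N (c + 1) (by omega) (by rw [b1, h2]) (by rw [b2, h0])
      rw [hv, h2]
      rw [h2] at hr
      push_cast
      have : (N (c + 1) : ℝ) = n - (m + 1) := by linarith
      rw [this]
      have hm : (0:ℝ) ≤ m := by positivity
      constructor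
      · rw [abs_of_nonneg (by linarith)]; linarith
      · nlinarith
    rw [VV_1 c h0 h1 h2]
    have i1 := ih (N + e (c + 1)) c
    have i2 := ih (N + e (c + 2)) c
    simp only [e_apply, a1, a2, a3, a4, a5, a6, if_true, if_false, add_zero] at i1 i2
    obtain ⟨p1, p2⟩ := i1 h0 (by omega) (by omega) (by omega)
    obtain ⟨q1, q2⟩ := i2 h0 (by omega) (by omega) (by omega)
    push_cast at *
    set A := VV n m (N + e (c + 1))
    set B := VV n m (N + e (c + 2))
    rw [abs_le] at *
    refine ⟨⟨by linarith, by linarith⟩, ?_⟩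
    linarith [sq_nonneg (A - B - 1 / 2)]

noncomputable def fN (N : Fin 3 → ℕ) : ℝ := ff (N 0) (N 1) (N 2)
noncomputable def DN (N : Fin 3 → ℕ) : ℝ := DD (N 0) (N 1) (N 2)
noncomputable def HN (m : ℕ) (N : Fin 3 → ℕ) : ℝ := HH m (N 0) (N 1) (N 2)

lemma HN_cyc (m : ℕ) (N : Fin 3 → ℕ) (c : Fin 3) : HN m N = HH m (N c) (N (c + 1)) (N (c + 2)) := by
  unfold HN
  fin_cases c
  · rfl
  · exact (HH_cyc m _ _ _).symm
  · exact (HH_cyc m _ _ _)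

lemma DN_cyc (N : Fin 3 → ℕ) (c : Fin 3) : DN N = DD (N c) (N (c + 1)) (N (c + 2)) := by
  unfold DN DD
  fin_cases c
  · rfl
  · show _ = ((N 1 : ℝ) - N 2) ^ 2 + (N 2 - N 0) ^ 2 + (N 0 - N 1) ^ 2
    ring
  · show _ = ((N 2 : ℝ) - N 0) ^ 2 + (N 0 - N 1) ^ 2 + (N 1 - N 2) ^ 2
    ring

lemma sqrt_young (m : ℕ) (δ : ℝ) (hδ : 0 < δ) : √m ≤ δ + (m : ℝ) ^ 2 / δ ^ 3 := by
  have hs : √(m:ℝ) ^ 2 = m := Real.sq_sqrt (by positivity)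
  have h0 : 0 ≤ √(m:ℝ) := by positivity
  set s := √(m:ℝ)
  rw [← hs]
  rcases le_total s δ with h | h
  · have : 0 ≤ (s ^ 2) ^ 2 / δ ^ 3 := by positivity
    linarith
  · have : s ≤ (s ^ 2) ^ 2 / δ ^ 3 := by
      rw [le_div_iff₀ (by positivity)]
      have : δ ^ 3 ≤ s ^ 3 := by gcongr
      nlinarith
    linarith

lemma boundary (n m : ℕ) (N : Fin 3 → ℕ) (c : Fin 3) (h0 : N c = n) (h1 : N (c + 1) ≤ n)
    (h2 : N (c + 2) ≤ n) (h3 : N (c + 1) + N (c + 2) + m = 2 * n) (δ : ℝ) (hδ : 0 < δ) :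
    |VV n m N - HN m N| ≤ 2 * (δ + 2 * (DN N + 2 * m) / δ ^ 3) := by
  obtain ⟨p1, p2⟩ := phase2 n m N c h0 h1 h2 h3
  rw [HN_cyc m N c, DN_cyc N c, h0]
  have l1 := ff_le_HH m n (N (c + 1)) (N (c + 2))
  have l2 := HH_le m n (N (c + 1)) (N (c + 2))
  have hr : (N (c + 1) : ℝ) + N (c + 2) + m = 2 * n := by exact_mod_cast h3
  have hx1 : (N (c + 1) : ℝ) ≤ n := by exact_mod_cast h1
  have hx2 : (N (c + 2) : ℝ) ≤ n := by exact_mod_cast h2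
  have hf : ff n (N (c + 1)) (N (c + 2)) = (n - N (c + 2)) / 2 +
      |((n : ℝ) - N (c + 1)) - (n - N (c + 2)) / 2| := by
    unfold ff
    rw [max_eq_left (b := (N (c + 2) : ℝ) - n)]
    · rcases abs_cases (((n : ℝ) - N (c + 1)) - (n - N (c + 2)) / 2) with ⟨h, _⟩ | ⟨h, _⟩ <;> rw [h]
      · rw [max_eq_left] <;> linarith
      · rw [max_eq_right] <;> linarith
    · rcases le_total (n - (N (c + 1) : ℝ)) (N (c + 1) - N (c + 2)) with h | h
      · rw [max_eq_right h]; linarith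
      · rw [max_eq_left h]; linarith
  have hs : √(m:ℝ) ^ 2 = m := Real.sq_sqrt (by positivity)
  have hs0 : 0 ≤ √(m:ℝ) := by positivity
  have hV : VV n m N - (n - N (c + 2)) / 2 ≤
      |((n : ℝ) - N (c + 1)) - (n - N (c + 2)) / 2| + √m := by
    refine (le_abs_self _).trans (abs_le_of_sq_le_sq ?_ (by positivity))
    nlinarith [sq_abs (((n : ℝ) - N (c + 1)) - (n - N (c + 2)) / 2),
      abs_nonneg (((n : ℝ) - N (c + 1)) - (n - N (c + 2)) / 2)]
  have h2m : √(2 * m) ≤ 2 * √(m:ℝ) := by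
    rw [Real.sqrt_le_left (by positivity)]; nlinarith
  have hb : |VV n m N - HH m n (N (c + 1)) (N (c + 2))| ≤ 2 * √m := by
    rw [abs_le]; constructor <;> linarith
  have hy := sqrt_young m δ hδ
  have hD : (m:ℝ) ^ 2 / δ ^ 3 ≤ 2 * (DD n (N (c + 1)) (N (c + 2)) + 2 * m) / δ ^ 3 := by
    gcongr
    unfold DD
    have : (m:ℝ) = (n - N (c + 1)) + (n - N (c + 2)) := by linarith
    have hm : (0:ℝ) ≤ m := by positivity
    have h5 : (m:ℝ) ^ 2 ≤ 2 * ((n - N (c + 1)) ^ 2 + (n - N (c + 2)) ^ 2) := by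
      rw [this]; nlinarith [sq_nonneg (((n:ℝ) - N (c + 1)) - (n - N (c + 2)))]
    nlinarith [sq_nonneg ((N (c + 1) : ℝ) - N (c + 2))]
  linarith

lemma phase1 (n m : ℕ) (δ : ℝ) (hδ : 0 < δ) : ∀ (N : Fin 3 → ℕ), (∀ i, N i ≤ n) →
    N 0 + N 1 + N 2 + m = 3 * n →
    |VV n m N - HN m N| ≤ 2 * (δ + 2 * (DN N + 2 * m) / δ ^ 3) := by
  have key : ∀ (m : ℕ) (N : Fin 3 → ℕ), (∀ i, N i ≤ n) → N 0 + N 1 + N 2 + m = 3 * n →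
      (∃ c, N c = n) → |VV n m N - HN m N| ≤ 2 * (δ + 2 * (DN N + 2 * m) / δ ^ 3) := by
    intro m N hN hs ⟨c, hc⟩
    refine boundary n m N c hc (hN _) (hN _) ?_ δ hδ
    have := sum3 N c
    rw [Fin.sum_univ_three] at this
    omega
  induction m with
  | zero =>
    intro N hN hs
    refine key 0 N hN hs ⟨0, ?_⟩
    have := hN 0; have := hN 1; have := hN 2; omega
  | succ m ih =>
    intro N hN hs
    by_cases hc : ∃ c, N c = n
    · exact key _ N hN hs hc
    push Not at hc
    have hlt : ∀ i, N i < n := fun i => lt_of_le_of_ne (hN i) (hc i)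
    have hle : ∀ j i, (N + e j) i ≤ n := by
      intro j i; rw [e_apply]; have := hlt i; split_ifs <;> omega
    have i0 := ih (N + e 0) (hle 0) (by simp [e]; omega)
    have i1 := ih (N + e 1) (hle 1) (by simp [e]; omega)
    have i2 := ih (N + e 2) (hle 2) (by simp [e]; omega)
    have hv : VV n (m + 1) N = (VV n m (N + e 0) + VV n m (N + e 1) + VV n m (N + e 2)) / 3 := VV_0 hlt 0
    have hh : HN (m + 1) N = (HN m (N + e 0) + HN m (N + e 1) + HN m (N + e 2)) / 3 := by
      simp [HN, HH, e]
    have hd : 3 * (DN N + 2 * ((m + 1 : ℕ) : ℝ)) = (DN (N + e 0) + 2 * m) + (DN (N + e 1) + 2 * m)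
        + (DN (N + e 2) + 2 * m) := by
      simp [DN, DD, e]; ring
    have hdd : 2 * (DN N + 2 * ((m + 1 : ℕ) : ℝ)) / δ ^ 3 = (2 * (DN (N + e 0) + 2 * m) / δ ^ 3 +
      2 * (DN (N + e 1) + 2 * m) / δ ^ 3 + 2 * (DN (N + e 2) + 2 * m) / δ ^ 3) / 3 := by
      rw [← add_div, ← add_div, div_div, mul_comm (δ ^ 3) 3, ← div_div]
      congr 1
      linarith
    rw [hv, hh, hdd]
    rw [abs_le] at *
    constructor <;> linarith

lemma VV_bound (n : ℕ) (δ : ℝ) (hδ : 0 < δ) :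
    |VV n (3 * n) (fun _ => 0) - LL n| ≤ 2 * (δ + 12 * n / δ ^ 3) := by
  have h := phase1 n (3 * n) δ hδ (fun _ => 0) (by simp) (by simp)
  simp only [HN, DN, DD, Nat.cast_zero, HH_three] at h
  refine h.trans (le_of_eq ?_)
  push_cast; ring

lemma VV_tendsto : Tendsto (fun n : ℕ => VV n (3 * n) (fun _ => 0) / √n) atTop
    (𝓝 (3 * √3 / (2 * √π))) := by
  have hb : ∀ n : ℕ, 1 ≤ n → |VV n (3 * n) (fun _ => 0) / √n - LL n / √n| ≤ 26 * (√(√n))⁻¹ := by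
    intro n hn
    have hnpos : (0:ℝ) < n := by exact_mod_cast hn
    have h1 : 0 < √(n:ℝ) := by positivity
    have h := VV_bound n (√(√n)) (by positivity)
    have e1 : √(n:ℝ) ^ 2 = n := Real.sq_sqrt hnpos.le
    have e2 : √(√(n:ℝ)) ^ 2 = √n := Real.sq_sqrt h1.le
    have h2 : 0 < √(√(n:ℝ)) := by positivity
    rw [← sub_div, abs_div, abs_of_pos h1, div_le_iff₀ h1]
    refine h.trans (le_of_eq ?_)
    set s := √(√(n:ℝ))
    have e3 : (n:ℝ) = s ^ 4 := by rw [← e1, ← e2]; ring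
    rw [← e2, e3]
    field_simp
    norm_num
  have h0 : Tendsto (fun n : ℕ => 26 * (√(√(n:ℝ)))⁻¹) atTop (𝓝 0) := by
    have : Tendsto (fun n : ℕ => √(√(n:ℝ))) atTop atTop :=
      Real.tendsto_sqrt_atTop.comp (Real.tendsto_sqrt_atTop.comp tendsto_natCast_atTop_atTop)
    simpa using this.inv_tendsto_atTop.const_mul 26
  have hd : Tendsto (fun n : ℕ => VV n (3 * n) (fun _ => 0) / √n - LL n / √n) atTop (𝓝 0) := by
    apply squeeze_zero_norm' _ h0
    filter_upwards [eventually_ge_atTop 1] with n hn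
    exact hb n hn
  simpa using hd.add LL_tendsto

lemma tri {n : ℕ} {N : Fin 3 → ℕ} (hN : ∀ i, N i ≤ n) (hs : N 0 + N 1 + N 2 < 3 * n) :
    (∀ i, N i < n) ∨ (∃ c, N c = n ∧ N (c + 1) < n ∧ N (c + 2) < n) ∨
    (∃ c, N c < n ∧ N (c + 1) = n ∧ N (c + 2) = n) := by
  by_cases h : ∀ i, N i < n
  · exact Or.inl h
  right
  push Not at h
  obtain ⟨c, hc⟩ := h
  have hc : N c = n := le_antisymm (hN c) hc
  obtain ⟨b1, b2, b3, b4⟩ := fin3b c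
  have hsum := sum3 N c
  rw [Fin.sum_univ_three] at hsum
  rcases (hN (c + 1)).eq_or_lt with h1 | h1 <;> rcases (hN (c + 2)).eq_or_lt with h2 | h2
  · omega
  · right; exact ⟨c + 2, h2, by rw [b3, hc], by rw [b4, h1]⟩
  · right; exact ⟨c + 1, h1, by rw [b1, h2], by rw [b2, hc]⟩
  · left; exact ⟨c, hc, h1, h2⟩

lemma sp0 {n : ℕ} {p q : (Fin 3 → ℕ) × ℤ} (h : ∀ i, p.1 i < n) : stepProb n p q =
    if (∃ i : Fin 3, q.1 = p.1 + e i) ∧ (q.2 = p.2 - 1 ∨ q.2 = p.2 ∨ q.2 = p.2 + 1)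
      then 1/9 else 0 := by
  unfold stepProb
  simp only [card0 h, if_true]

lemma sp1 {n : ℕ} {p q : (Fin 3 → ℕ) × ℤ} (c : Fin 3) (h0 : p.1 c = n) (h1 : p.1 (c + 1) < n)
    (h2 : p.1 (c + 2) < n) : stepProb n p q =
      if q.1 = p.1 + e (c+1) ∧ q.2 = p.2 + 1 then 2/9
       else if q.1 = p.1 + e (c+1) ∧ q.2 = p.2 - 1 then 1/9
       else if q.1 = p.1 + e (c+2) ∧ q.2 = p.2 then 4/9
       else if q.1 = p.1 + e (c+2) ∧ q.2 = p.2 + 1 then 2/9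
       else 0 := by
  unfold stepProb
  simp only [card1 c h0 h1 h2, if_true]
  rw [if_neg (by norm_num), sum3 _ c, if_pos h0, if_neg h1.ne, if_neg h2.ne, add_zero, add_zero]

lemma sp2 {n : ℕ} {p q : (Fin 3 → ℕ) × ℤ} (c : Fin 3) (h0 : p.1 c < n) (h1 : p.1 (c + 1) = n)
    (h2 : p.1 (c + 2) = n) : stepProb n p q =
      if q.1 = p.1 + e c ∧ q.2 = p.2 + 1 then 1 else 0 := by
  unfold stepProb
  simp only [card2 c h0 h1 h2, if_true]
  rw [if_neg (by norm_num), if_neg (by norm_num)]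
  have : (∃ i : Fin 3, p.1 i < n ∧ q.1 = p.1 + e i ∧ q.2 = p.2 + 1) ↔
      (q.1 = p.1 + e c ∧ q.2 = p.2 + 1) := by
    constructor
    · rintro ⟨i, hi, h⟩
      have : i = c := by
        revert i
        refine all3 c ?_ ?_ ?_
        · intros; rfl
        · intro h; omega
        · intro h; omega
      rwa [← this]
    · intro h; exact ⟨c, h0, h⟩
  simp only [this]

lemma e_inj (N : Fin 3 → ℕ) (i j : Fin 3) : N + e i = N + e j ↔ i = j := by
  constructor
  · intro h
    have := congrFun h i
    simp only [e_apply, if_true] at this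
    by_contra hij
    simp [hij] at this
  · rintro rfl; rfl

lemma sp_support {n : ℕ} {p q : (Fin 3 → ℕ) × ℤ} (hN : ∀ i, p.1 i ≤ n)
    (hs : p.1 0 + p.1 1 + p.1 2 < 3 * n) (h : stepProb n p q ≠ 0) :
    ∃ i, p.1 i < n ∧ q.1 = p.1 + e i ∧ (q.2 = p.2 - 1 ∨ q.2 = p.2 ∨ q.2 = p.2 + 1) := by
  rcases tri hN hs with h0 | ⟨c, h0, h1, h2⟩ | ⟨c, h0, h1, h2⟩
  · rw [sp0 h0] at h
    split_ifs at h with hh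
    · obtain ⟨⟨i, hi⟩, h3⟩ := hh
      exact ⟨i, h0 i, hi, h3⟩
    · simp at h
  · rw [sp1 c h0 h1 h2] at h
    split_ifs at h with k1 k2 k3 k4
    · exact ⟨c + 1, h1, k1.1, by simp [k1.2]⟩
    · exact ⟨c + 1, h1, k2.1, by simp [k2.2]⟩
    · exact ⟨c + 2, h2, k3.1, by simp [k3.2]⟩
    · exact ⟨c + 2, h2, k4.1, by simp [k4.2]⟩
    · simp at h
  · rw [sp2 c h0 h1 h2] at h
    split_ifs at h with k1
    · exact ⟨c, h0, k1.1, by simp [k1.2]⟩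
    · simp at h

/-- Successor states. -/
def suc (p : (Fin 3 → ℕ) × ℤ) (j : Fin 3 × Fin 3) : (Fin 3 → ℕ) × ℤ :=
  (p.1 + e j.1, p.2 + (j.2 : ℕ) - 1)

lemma suc_inj (p : (Fin 3 → ℕ) × ℤ) : Function.Injective (suc p) := by
  rintro ⟨i, d⟩ ⟨i₁, d₁⟩ h
  simp only [suc, Prod.mk.injEq, e_inj] at h
  obtain ⟨h1, h2⟩ := h
  ext
  · simp [h1]
  · simp; omega

lemma sum_suc (A : Finset ((Fin 3 → ℕ) × ℤ)) (p : (Fin 3 → ℕ) × ℤ) (g : (Fin 3 → ℕ) × ℤ → ℝ)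
    (h : ∀ q, g q ≠ 0 → q ∈ A ∧ ∃ j, q = suc p j) :
    ∑ q ∈ A, g q = ∑ i, (g (suc p (i, 0)) + g (suc p (i, 1)) + g (suc p (i, 2))) := by
  classical
  have h1 : ∑ j : Fin 3 × Fin 3, g (suc p j) = ∑ q ∈ Finset.univ.image (suc p), g q :=
    (Finset.sum_image (fun _ _ _ _ h => suc_inj p h)).symm
  have h2 : ∑ q ∈ A, g q = ∑ q ∈ A ∪ Finset.univ.image (suc p), g q := by
    apply Finset.sum_subset Finset.subset_union_left
    intro q _ hq
    by_contra hg
    exact hq (h q hg).1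
  have h3 : ∑ q ∈ Finset.univ.image (suc p), g q = ∑ q ∈ A ∪ Finset.univ.image (suc p), g q := by
    apply Finset.sum_subset Finset.subset_union_right
    intro q _ hq
    by_contra hg
    obtain ⟨j, hj⟩ := (h q hg).2
    exact hq (by simp [hj])
  rw [h2, ← h3, ← h1, Fintype.sum_prod_type]
  simp only [Fin.sum_univ_three]

lemma suc_of {p q : (Fin 3 → ℕ) × ℤ} {i : Fin 3} (h1 : q.1 = p.1 + e i)
    (h2 : q.2 = p.2 - 1 ∨ q.2 = p.2 ∨ q.2 = p.2 + 1) : ∃ j, q = suc p j := by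
  rcases h2 with h | h | h
  · exact ⟨(i, 0), Prod.ext h1 (by simp [suc, h])⟩
  · exact ⟨(i, 1), Prod.ext h1 (by simp [suc, h])⟩
  · exact ⟨(i, 2), Prod.ext h1 (by simp [suc, h]; ring)⟩

def II (n t : ℕ) (p : (Fin 3 → ℕ) × ℤ) : Prop :=
  (∀ i, p.1 i ≤ n) ∧ p.1 0 + p.1 1 + p.1 2 = t ∧ |p.2| ≤ t

lemma II_step {n t : ℕ} (ht : t < 3 * n) {p q : (Fin 3 → ℕ) × ℤ} (hp : II n t p)
    (h : stepProb n p q ≠ 0) : II n (t + 1) q ∧ ∃ j, q = suc p j := by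
  obtain ⟨h1, h2, h3⟩ := hp
  obtain ⟨i, hi, hq, hq2⟩ := sp_support h1 (by omega) h
  refine ⟨⟨?_, ?_, ?_⟩, suc_of hq hq2⟩
  · intro j; rw [hq, e_apply]; have := h1 j
    split_ifs with hj
    · rw [hj]; omega
    · omega
  · rw [hq]
    simp only [e_apply]
    have : ∀ i : Fin 3, (if (0 : Fin 3) = i then 1 else 0) + (if (1 : Fin 3) = i then 1 else 0) +
      (if (2 : Fin 3) = i then 1 else 0) = 1 := by decide
    have := this i
    omega
  · rw [abs_le] at *; push_cast; omega

noncomputable def AA (n : ℕ) : Finset ((Fin 3 → ℕ) × ℤ) :=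
  (Fintype.piFinset fun _ => Finset.range (n + 1)) ×ˢ Finset.Icc (-(3 * n : ℤ)) (3 * n)

lemma II_mem {n t : ℕ} (ht : t ≤ 3 * n) {p : (Fin 3 → ℕ) × ℤ} (hp : II n t p) : p ∈ AA n := by
  obtain ⟨h1, h2, h3⟩ := hp
  rw [abs_le] at h3
  simp only [AA, Finset.mem_product, Fintype.mem_piFinset, Finset.mem_range, Finset.mem_Icc]
  refine ⟨fun i => by have := h1 i; omega, by omega, by omega⟩

lemma step_sum {n t m : ℕ} (ht : t < 3 * n) {p : (Fin 3 → ℕ) × ℤ} (hp : II n t p) :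
    ∑ q ∈ AA n, (stepProb n p q).toReal * (q.2 + VV n m q.1) = p.2 + VV n (m + 1) p.1 := by
  have hsup : ∀ q, (stepProb n p q).toReal * (q.2 + VV n m q.1) ≠ 0 → q ∈ AA n ∧ ∃ j, q = suc p j := by
    intro q hq
    have : stepProb n p q ≠ 0 := by
      intro h0; rw [h0] at hq; simp at hq
    obtain ⟨h1, h2⟩ := II_step ht hp this
    exact ⟨II_mem (by omega) h1, h2⟩
  rw [sum_suc _ _ _ hsup]
  have z1 : ∀ s : ℤ, s ≠ s + 1 + 1 ∧ s - 1 ≠ s + 1 ∧ s - 1 ≠ s ∧ s + 1 ≠ s ∧ s + 1 ≠ s - 1 ∧ s ≠ s + 1 ∧ s ≠ s - 1 := by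
    intro s; omega
  have e0 : ∀ i, suc p (i, 0) = (p.1 + e i, p.2 - 1) := by intro i; simp [suc]
  have e1 : ∀ i, suc p (i, 1) = (p.1 + e i, p.2) := by intro i; simp [suc]
  have e2 : ∀ i, suc p (i, 2) = (p.1 + e i, p.2 + 1) := by intro i; simp [suc]; ring
  obtain ⟨y1, y2, y3, y4, y5, y6, y7⟩ := z1 p.2
  simp only [e0, e1, e2]
  rcases tri hp.1 (by have := hp.2.1; omega) with h0 | ⟨c, h0, h1, h2⟩ | ⟨c, h0, h1, h2⟩
  · simp only [sp0 h0, sum3 _ (0 : Fin 3), VV_0 h0 0, e_inj]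
    simp
    ring
  · obtain ⟨a1, a2, a3, a4, a5, a6⟩ := fin3a c
    simp only [sp1 c h0 h1 h2, sum3 _ c, VV_1 c h0 h1 h2, e_inj, a1, a2, a3, a4, a5, a6, y1, y2, y3, y4,
      y5, y6, y7, and_true, and_false, if_true, if_false, true_and, false_and]
    simp
    ring
  · obtain ⟨a1, a2, a3, a4, a5, a6⟩ := fin3a c
    simp only [sp2 c h0 h1 h2, sum3 _ c, VV_2 c h0 h1 h2, e_inj, a1, a2, a3, a4, a5, a6, y1, y2, y3, y4,
      y5, y6, y7, and_true, and_false, if_true, if_false, true_and, false_and]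
    simp
    ring

section Chain

variable {n : ℕ} {Ω : Type*} [MeasurableSpace Ω] {μ : Measure Ω} {NS : ℕ → Ω → (Fin 3 → ℕ) × ℤ}

lemma pair_meas (h : IsGreedyProcess n μ NS) {t : ℕ} (ht : t < 3 * n) (p q : (Fin 3 → ℕ) × ℤ) :
    μ {ω | NS t ω = p ∧ NS (t + 1) ω = q} = stepProb n p q * μ {ω | NS t ω = p} := by
  obtain ⟨hP, hm, -, hstep⟩ := h
  let F : (Fin t → (Fin 3 → ℕ) × ℤ) → ℕ → (Fin 3 → ℕ) × ℤ := fun g u =>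
    if hu : u < t then g ⟨u, hu⟩ else if u = t then p else q
  have Ft : ∀ g, F g t = p := by intro g; simp [F]
  have Ft1 : ∀ g, F g (t + 1) = q := by intro g; simp [F]
  have Flt : ∀ g (u : Fin t), F g u = g u := by intro g u; simp [F]
  have meas : ∀ g s, MeasurableSet {ω | ∀ u ≤ s, NS u ω = F g u} := by
    intro g s
    have : {ω | ∀ u ≤ s, NS u ω = F g u} = ⋂ u, ⋂ (_ : u ≤ s), NS u ⁻¹' {F g u} := by
      ext ω; simp
    rw [this]
    exact MeasurableSet.iInter fun u => MeasurableSet.iInter fun _ => hm u (measurableSet_singleton _)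
  have disj : ∀ s, t ≤ s → Pairwise (Function.onFun Disjoint fun g => {ω | ∀ u ≤ s, NS u ω = F g u}) := by
    intro s hs g g₁ hgg
    rw [Function.onFun, Set.disjoint_left]
    intro ω h1 h2
    apply hgg
    funext u
    have k1 := h1 u (by omega)
    have k2 := h2 u (by omega)
    rw [Flt] at k1 k2
    rw [← k1, ← k2]
  have u1 : {ω | NS t ω = p ∧ NS (t + 1) ω = q} = ⋃ g, {ω | ∀ u ≤ t + 1, NS u ω = F g u} := by
    ext ω
    simp only [Set.mem_ofPred_eq, Set.mem_iUnion]
    constructor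
    · rintro ⟨h1, h2⟩
      refine ⟨fun u => NS u ω, fun u hu => ?_⟩
      rcases lt_trichotomy u t with h | h | h
      · simp [F, h]
      · subst h; simp [F, h1]
      · have : u = t + 1 := by omega
        subst this; simp [F, h2]
    · rintro ⟨g, hg⟩
      exact ⟨by rw [hg t (by omega), Ft], by rw [hg (t + 1) le_rfl, Ft1]⟩
  have u2 : {ω | NS t ω = p} = ⋃ g, {ω | ∀ u ≤ t, NS u ω = F g u} := by
    ext ω
    simp only [Set.mem_ofPred_eq, Set.mem_iUnion]
    constructor
    · intro h1
      refine ⟨fun u => NS u ω, fun u hu => ?_⟩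
      rcases hu.lt_or_eq with h | h
      · simp [F, h]
      · subst h; simp [F, h1]
    · rintro ⟨g, hg⟩
      rw [hg t le_rfl, Ft]
  rw [u1, u2, measure_iUnion (disj _ (by omega)) (fun g => meas g _),
    measure_iUnion (disj _ le_rfl) (fun g => meas g _), ← ENNReal.tsum_mul_left]
  congr 1
  funext g
  rw [hstep t ht (F g), Ft, Ft1]

lemma marg (h : IsGreedyProcess n μ NS) {t : ℕ} (ht : t < 3 * n) (q : (Fin 3 → ℕ) × ℤ) :
    μ {ω | NS (t + 1) ω = q} = ∑' p, stepProb n p q * μ {ω | NS t ω = p} := by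
  have hm := h.2.1
  have u1 : {ω | NS (t + 1) ω = q} = ⋃ p, {ω | NS t ω = p ∧ NS (t + 1) ω = q} := by
    ext ω; simp
  rw [u1, measure_iUnion]
  · congr 1; funext p; exact pair_meas h ht p q
  · intro p p₁ hpp
    rw [Function.onFun, Set.disjoint_left]
    rintro ω ⟨h1, _⟩ ⟨h2, _⟩
    exact hpp (h1.symm.trans h2)
  · intro p
    exact (hm t (measurableSet_singleton p)).inter (hm (t + 1) (measurableSet_singleton q))

lemma start_zero (h : IsGreedyProcess n μ NS) (p : (Fin 3 → ℕ) × ℤ) (hp : p ≠ (fun _ => 0, 0)) :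
    μ {ω | NS 0 ω = p} = 0 := by
  obtain ⟨hP, hm, h0, -⟩ := h
  have : μ {ω | NS 0 ω = (fun _ => 0, 0)}ᶜ = 0 := by
    rw [prob_compl_eq_zero_iff]
    · exact h0
    · exact hm 0 (measurableSet_singleton _)
  refine measure_mono_null ?_ this
  intro ω hω hωb
  exact hp (hω.symm.trans hωb)

lemma supp (h : IsGreedyProcess n μ NS) (t : ℕ) : t ≤ 3 * n → ∀ p, ¬ II n t p →
    μ {ω | NS t ω = p} = 0 := by
  induction t with
  | zero =>
    intro _ p hp
    apply start_zero h
    rintro rfl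
    exact hp ⟨by simp, by simp, by simp⟩
  | succ t ih =>
    intro ht q hq
    rw [marg h (by omega)]
    rw [ENNReal.tsum_eq_zero]
    intro p
    by_cases hp : II n t p
    · by_cases hs : stepProb n p q = 0
      · simp [hs]
      · exact absurd (II_step (by omega) hp hs).1 hq
    · rw [ih (by omega) p hp, mul_zero]

lemma marg_real (h : IsGreedyProcess n μ NS) {t : ℕ} (ht : t < 3 * n) (q : (Fin 3 → ℕ) × ℤ) :
    μ.real {ω | NS (t + 1) ω = q} = ∑ p ∈ AA n, (stepProb n p q).toReal * μ.real {ω | NS t ω = p} := by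
  have := h.1
  unfold Measure.real
  rw [marg h ht, tsum_eq_sum (s := AA n), ENNReal.toReal_sum]
  · simp only [ENNReal.toReal_mul]
  · intro p _
    rw [← pair_meas h ht]
    exact measure_ne_top _ _
  · intro p hp
    rw [supp h t ht.le p (fun hI => hp (II_mem ht.le hI)), mul_zero]

lemma const_exp (h : IsGreedyProcess n μ NS) (t : ℕ) : ∀ m, t + m = 3 * n →
    ∑ p ∈ AA n, μ.real {ω | NS t ω = p} * (p.2 + VV n m p.1) = VV n (3 * n) (fun _ => 0) := by
  induction t with
  | zero =>
    intro m hm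
    rw [Finset.sum_eq_single (fun _ => 0, 0)]
    · rw [Measure.real, h.2.2.1]
      simp [← hm]
    · intro p _ hp
      rw [Measure.real, start_zero h p hp]; simp
    · intro hn
      exact absurd (II_mem (t := 0) (by omega) ⟨by simp, by simp, by simp⟩) hn
  | succ t ih =>
    intro m hm
    rw [← ih (m + 1) (by omega)]
    simp only [marg_real h (show t < 3 * n by omega), Finset.sum_mul]
    rw [Finset.sum_comm]
    apply Finset.sum_congr rfl
    intro p _
    by_cases hp : II n t p
    · rw [← step_sum (by omega) hp, Finset.mul_sum]
      apply Finset.sum_congr rfl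
      intro q _
      ring
    · rw [Measure.real, supp h t (by omega) p hp]; simp

lemma expect (h : IsGreedyProcess n μ NS) :
    ∫ ω, (((NS (3 * n) ω).2 : ℝ)) ∂μ = VV n (3 * n) (fun _ => 0) := by
  have := h.1
  have hm := h.2.1 (3 * n)
  rw [← const_exp h (3 * n) 0 (by omega)]
  have h1 : ∫ ω, (((NS (3 * n) ω).2 : ℝ)) ∂μ = ∫ p, (p.2 : ℝ) ∂(μ.map (NS (3 * n))) := by
    rw [integral_map hm.aemeasurable]
    exact (measurable_of_countable _).aestronglyMeasurable
  have hae : ∀ᵐ p ∂(μ.map (NS (3 * n))), p ∈ (AA n : Set ((Fin 3 → ℕ) × ℤ)) := by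
    rw [ae_iff_of_countable]
    intro p hp
    rw [Measure.map_apply hm (measurableSet_singleton _)] at hp
    by_contra hA
    exact hp (supp h (3 * n) le_rfl p (fun hI => hA (II_mem le_rfl hI)))
  rw [h1, ← Measure.restrict_eq_self_of_ae_mem hae, setIntegral_finset _ (IntegrableOn.finset)]
  apply Finset.sum_congr rfl
  intro p _
  rw [Measure.real, Measure.map_apply hm (measurableSet_singleton _)]
  simp [VV, Measure.real, Set.preimage]

end Chain

/-- Theorem 1 via greedy play:
`E[S_n^gr] / sqrt n → 3√3 / (2√π)` as `n → ∞`. -/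
theorem expected_greedy_score_asymptotics
    (Ω : ℕ → Type*) [∀ n, MeasurableSpace (Ω n)] (μ : ∀ n, Measure (Ω n))
    (NS : ∀ n, ℕ → Ω n → (Fin 3 → ℕ) × ℤ)
    (hproc : ∀ n, 1 ≤ n → IsGreedyProcess n (μ n) (NS n)) :
    Tendsto (fun n : ℕ =>
        (∫ ω, (((NS n (3 * n) ω).2 : ℝ)) ∂(μ n)) / Real.sqrt n)
      atTop (𝓝 (3 * Real.sqrt 3 / (2 * Real.sqrt π))) := by
  refine VV_tendsto.congr' ?_
  filter_upwards [eventually_ge_atTop 1] with n hn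
  rw [expect (hproc n hn)]

end RPSGreedy
end

section
/- (Lemma L1.) For every p ∈ [1,∞) there is a constant C_p, independent of n, such that E| S(3n) − S(T_0) − max(X_1 + 2X_2, X_2 + 2X_3, X_3 + 2X_1) |^p ≤ C_p · n^{p/3} for all n ≥ 1. -/
open MeasureTheory ProbabilityTheory Real Filter
open scoped ENNReal Topology

namespace RPSGreedy

/-- Compensator increment of the `i`-th process. -/
noncomputable def drift (n : ℕ) (i : Fin 3) (p : (Fin 3 → ℕ) × ℤ) : ℝ :=
  if p.1 (i + 1) ≠ n then 0
  else if p.1 i ≠ n ∧ p.1 (i + 2) = n then 2 else 1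

/-- Martingale increment of the `i`-th process. -/
noncomputable def dinc (n : ℕ) (i : Fin 3) (p q : (Fin 3 → ℕ) × ℤ) : ℝ :=
  ((q.2 : ℝ) - p.2) - ((q.1 (i + 1) : ℝ) - p.1 (i + 1)) + ((q.1 i : ℝ) - p.1 i) - drift n i p

lemma drift_nonneg (n : ℕ) (i : Fin 3) (p : (Fin 3 → ℕ) × ℤ) : 0 ≤ drift n i p := by
  unfold drift; split_ifs <;> norm_num

lemma step_int {n : ℕ} {Ω : Type*} [MeasurableSpace Ω] {μ : Measure Ω}
    {NS : ℕ → Ω → (Fin 3 → ℕ) × ℤ} (h : IsGreedyProcess n μ NS) {t : ℕ} (ht : t < 3 * n)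
    (G : (ℕ → (Fin 3 → ℕ) × ℤ) → ℝ≥0∞)
    (φ : (Fin 3 → ℕ) × ℤ → (Fin 3 → ℕ) × ℤ → ℝ≥0∞) :
    ∫⁻ ω, G (fun u => NS (min u t) ω) * φ (NS t ω) (NS (t+1) ω) ∂μ
      = ∫⁻ ω, G (fun u => NS (min u t) ω) * ∑' q, stepProb n (NS t ω) q * φ (NS t ω) q ∂μ := by
  obtain ⟨hp, hm, h0, hs⟩ := h
  let P : Ω → (Fin (t+1) → (Fin 3 → ℕ) × ℤ) := fun ω u => NS u ω
  have hP : Measurable P := measurable_pi_lambda _ (fun u => hm u)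
  let ext : (Fin (t+1) → (Fin 3 → ℕ) × ℤ) → ℕ → (Fin 3 → ℕ) × ℤ :=
    fun x u => x ⟨min u t, by omega⟩
  let last : (Fin (t+1) → (Fin 3 → ℕ) × ℤ) → (Fin 3 → ℕ) × ℤ := fun x => x ⟨t, by omega⟩
  have hY : Measurable (fun ω => (P ω, NS (t+1) ω)) := hP.prodMk (hm _)
  have hL : ∫⁻ ω, G (fun u => NS (min u t) ω) * φ (NS t ω) (NS (t+1) ω) ∂μ
      = ∫⁻ y, G (ext y.1) * φ (last y.1) y.2 ∂(μ.map (fun ω => (P ω, NS (t+1) ω))) := by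
    rw [lintegral_map (measurable_of_countable _) hY]
  have hR : ∫⁻ ω, G (fun u => NS (min u t) ω) * ∑' q, stepProb n (NS t ω) q * φ (NS t ω) q ∂μ
      = ∫⁻ x, G (ext x) * ∑' q, stepProb n (last x) q * φ (last x) q ∂(μ.map P) := by
    rw [lintegral_map (measurable_of_countable _) hP]
  rw [hL, hR, lintegral_countable', lintegral_countable', ENNReal.tsum_prod']
  refine tsum_congr fun x => ?_
  rw [Measure.map_apply hP (measurableSet_singleton _), ← ENNReal.tsum_mul_left,
    ← ENNReal.tsum_mul_right]
  refine tsum_congr fun q => ?_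
  rw [Measure.map_apply hY (measurableSet_singleton _)]
  let f : ℕ → (Fin 3 → ℕ) × ℤ := fun u => if hu : u < t + 1 then x ⟨u, hu⟩ else q
  have key := hs t ht f
  have e1 : {ω | ∀ u ≤ t + 1, NS u ω = f u} = (fun ω => (P ω, NS (t+1) ω)) ⁻¹' {(x, q)} := by
    ext ω
    simp only [Set.mem_ofPred_eq, Set.mem_preimage, Set.mem_singleton_iff, Prod.mk.injEq]
    constructor
    · intro hh
      refine ⟨funext fun u => ?_, ?_⟩
      · have := hh u (by omega)
        exact this.trans (dif_pos u.2)
      · simpa [f] using hh (t+1) le_rfl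
    · rintro ⟨h1, h2⟩ u hu
      by_cases hu' : u < t + 1
      · simp only [f, hu', dif_pos]
        rw [← h1]
      · obtain rfl : u = t + 1 := by omega
        simp [f, h2]
  have e2 : {ω | ∀ u ≤ t, NS u ω = f u} = P ⁻¹' {x} := by
    ext ω
    simp only [Set.mem_ofPred_eq, Set.mem_preimage, Set.mem_singleton_iff]
    constructor
    · intro hh
      funext u
      have := hh u (by omega)
      exact this.trans (dif_pos u.2)
    · rintro h1 u hu
      have hu' : u < t + 1 := by omega
      simp only [f, hu', dif_pos]
      rw [← h1]
  have e3 : f t = last x := by simp [f, last]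
  have e4 : f (t+1) = q := by simp [f]
  rw [e1, e2, e3, e4] at key
  rw [key]
  ring

lemma tsum_atom (a : ℝ≥0∞) (q0 : (Fin 3 → ℕ) × ℤ) (φ : (Fin 3 → ℕ) × ℤ → ℝ≥0∞) :
    ∑' q, (if q = q0 then a else 0) * φ q = a * φ q0 := by
  simp [ite_mul, tsum_ite_eq]

lemma tsum_le_atoms {ι : Type*} [Fintype ι] (w : ι → ℝ≥0∞) (y : ι → (Fin 3 → ℕ) × ℤ)
    (F φ : (Fin 3 → ℕ) × ℤ → ℝ≥0∞)
    (hF : ∀ q, F q ≤ ∑ k, if q = y k then w k else 0) :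
    ∑' q, F q * φ q ≤ ∑ k, w k * φ (y k) := by
  calc ∑' q, F q * φ q ≤ ∑' q, ∑ k, (if q = y k then w k else 0) * φ q := by
        refine ENNReal.tsum_le_tsum fun q => ?_
        rw [← Finset.sum_mul]
        gcongr
        exact hF q
    _ = ∑ k, ∑' q, (if q = y k then w k else 0) * φ q := by
        rw [Summable.tsum_finsetSum]
        intro i _
        exact ENNReal.summable
    _ = _ := by simp only [tsum_atom]

lemma exp_bd {l x : ℝ} (hl : |l| ≤ 1/4) (hx : |x| ≤ 2) :
    exp (l * x) ≤ 1 + l * x + 4 * l ^ 2 := by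
  have h1 : |l * x| ≤ 1 := by
    rw [abs_mul]; nlinarith [abs_nonneg l, abs_nonneg x]
  have h2 := (abs_le.1 (Real.abs_exp_sub_one_sub_id_le h1)).2
  have h3 : (l * x)^2 ≤ 4 * l^2 := by
    rw [mul_pow]
    have : x^2 ≤ 4 := by
      have := sq_le_sq' (by linarith [neg_abs_le x, (abs_le.1 hx).1] : -2 ≤ x) (abs_le.1 hx).2
      linarith
    nlinarith [sq_nonneg l]
  linarith

lemma mean_exp {ι : Type*} [Fintype ι] (w x : ι → ℝ) (hw : ∀ k, 0 ≤ w k) (hw1 : ∑ k, w k = 1)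
    (hx : ∀ k, |x k| ≤ 2) (h0 : ∑ k, w k * x k = 0) {l : ℝ} (hl : |l| ≤ 1/4) :
    ∑ k, w k * exp (l * x k) ≤ exp (4 * l ^ 2) := by
  calc ∑ k, w k * exp (l * x k) ≤ ∑ k, w k * (1 + l * x k + 4 * l ^ 2) := by
        refine Finset.sum_le_sum fun k _ => ?_
        exact mul_le_mul_of_nonneg_left (exp_bd hl (hx k)) (hw k)
    _ = (∑ k, w k) * (1 + 4 * l^2) + l * ∑ k, w k * x k := by
        rw [Finset.sum_mul, Finset.mul_sum, ← Finset.sum_add_distrib]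
        refine Finset.sum_congr rfl fun k _ => by ring
    _ = 4 * l^2 + 1 := by rw [hw1, h0]; ring
    _ ≤ _ := Real.add_one_le_exp _

lemma atoms_exp {ι : Type*} [Fintype ι] (n : ℕ) (i : Fin 3) (p : (Fin 3 → ℕ) × ℤ)
    (w : ι → ℝ) (y : ι → (Fin 3 → ℕ) × ℤ)
    (hF : ∀ q, stepProb n p q ≤ ∑ k, if q = y k then ENNReal.ofReal (w k) else 0)
    (hw : ∀ k, 0 ≤ w k) (hw1 : ∑ k, w k = 1)
    (hx : ∀ k, |dinc n i p (y k)| ≤ 2) (h0 : ∑ k, w k * dinc n i p (y k) = 0)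
    {l : ℝ} (hl : |l| ≤ 1/4) :
    ∑' q, stepProb n p q * ENNReal.ofReal (exp (l * dinc n i p q))
      ≤ ENNReal.ofReal (exp (4 * l ^ 2)) := by
  refine (tsum_le_atoms (fun k => ENNReal.ofReal (w k)) y _ _ hF).trans ?_
  simp only [← ENNReal.ofReal_mul (hw _)]
  rw [← ENNReal.ofReal_sum_of_nonneg (fun k _ => mul_nonneg (hw k) (exp_pos _).le)]
  exact ENNReal.ofReal_le_ofReal (mean_exp w _ hw hw1 hx h0 hl)

lemma sum_ninth : (1:ℝ≥0∞)/9 = ENNReal.ofReal (1/9) := by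
  rw [ENNReal.ofReal_div_of_pos (by norm_num)]; simp

lemma sum_two_ninth : (2:ℝ≥0∞)/9 = ENNReal.ofReal (2/9) := by
  rw [ENNReal.ofReal_div_of_pos (by norm_num)]; simp

lemma sum_four_ninth : (4:ℝ≥0∞)/9 = ENNReal.ofReal (4/9) := by
  rw [ENNReal.ofReal_div_of_pos (by norm_num)]; simp

lemma stepProb_zero (n : ℕ) (p q : (Fin 3 → ℕ) × ℤ) (h : ∀ i, p.1 i ≠ n) :
    stepProb n p q = if (∃ i : Fin 3, q.1 = p.1 + e i) ∧
      (q.2 = p.2 - 1 ∨ q.2 = p.2 ∨ q.2 = p.2 + 1) then 1/9 else 0 := by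
  have hk : (Finset.univ.filter fun i => p.1 i = n).card = 0 := by
    simp [h]
  simp only [stepProb, hk, if_true]

lemma stepProb_one (n : ℕ) (p q : (Fin 3 → ℕ) × ℤ) (c : Fin 3) (h : p.1 c = n)
    (h1 : p.1 (c+1) ≠ n) (h2 : p.1 (c+2) ≠ n) :
    stepProb n p q = 
      (if q.1 = p.1 + e (c+1) ∧ q.2 = p.2 + 1 then 2/9
       else if q.1 = p.1 + e (c+1) ∧ q.2 = p.2 - 1 then 1/9
       else if q.1 = p.1 + e (c+2) ∧ q.2 = p.2 then 4/9
       else if q.1 = p.1 + e (c+2) ∧ q.2 = p.2 + 1 then 2/9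
       else 0) := by
  have hk : (Finset.univ.filter fun i => p.1 i = n).card = 1 := by
    rw [Finset.card_filter, Fin.sum_univ_three]
    fin_cases c <;> simp at h h1 h2 <;> simp [h, h1, h2]
  simp only [stepProb, hk, if_true, one_ne_zero, if_false]
  rw [Finset.sum_eq_single c]
  · rw [if_pos h]
  · intro b _ hb
    rw [if_neg]
    intro hb'
    fin_cases c <;> fin_cases b <;> simp_all
  · simp

lemma stepProb_two (n : ℕ) (p q : (Fin 3 → ℕ) × ℤ) (c : Fin 3) (h : p.1 c ≠ n)
    (h1 : p.1 (c+1) = n) (h2 : p.1 (c+2) = n) :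
    stepProb n p q = 
      if ∃ i : Fin 3, p.1 i < n ∧ q.1 = p.1 + e i ∧ q.2 = p.2 + 1 then 1 else 0 := by
  have hk : (Finset.univ.filter fun i => p.1 i = n).card = 2 := by
    rw [Finset.card_filter, Fin.sum_univ_three]
    fin_cases c <;> simp at h h1 h2 <;> simp [h, h1, h2]
  simp only [stepProb, hk, if_true, OfNat.ofNat_ne_zero, OfNat.ofNat_ne_one, if_false]

lemma stepProb_three (n : ℕ) (p q : (Fin 3 → ℕ) × ℤ) (h : ∀ i, p.1 i = n) :
    stepProb n p q = 0 := by
  have hk : (Finset.univ.filter fun i => p.1 i = n).card = 3 := by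
    simp [h]
  simp [stepProb, hk]

lemma four_cases (n : ℕ) (N : Fin 3 → ℕ) :
    (∀ i, N i ≠ n) ∨ (∃ c, N c = n ∧ N (c+1) ≠ n ∧ N (c+2) ≠ n) ∨
    (∃ c, N c ≠ n ∧ N (c+1) = n ∧ N (c+2) = n) ∨ (∀ i, N i = n) := by
  have e0 : (1 : Fin 3) + 1 = 2 := rfl
  have e1 : (2 : Fin 3) + 1 = 0 := rfl
  have e2 : (1 : Fin 3) + 2 = 0 := rfl
  have e3 : (2 : Fin 3) + 2 = 1 := rfl
  have e4 : (0 : Fin 3) + 1 = 1 := rfl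
  have e5 : (0 : Fin 3) + 2 = 2 := rfl
  have e6 : ∀ P : Fin 3 → Prop, (∀ i, P i) ↔ P 0 ∧ P 1 ∧ P 2 := fun P =>
    ⟨fun h => ⟨h 0, h 1, h 2⟩, fun ⟨a, b, c⟩ i => by fin_cases i <;> assumption⟩
  have e7 : ∀ P : Fin 3 → Prop, (∃ i, P i) ↔ P 0 ∨ P 1 ∨ P 2 := fun P =>
    ⟨fun ⟨i, h⟩ => by fin_cases i <;> simp_all, fun h => by
      rcases h with h | h | h <;> exact ⟨_, h⟩⟩
  simp only [e6, e7, e0, e1, e2, e3, e4, e5]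
  tauto

lemma support_step {n : ℕ} {p q : (Fin 3 → ℕ) × ℤ} (hp : ∀ i, p.1 i ≤ n)
    (h : stepProb n p q ≠ 0) : ∃ j, p.1 j < n ∧ q.1 = p.1 + e j := by
  rcases four_cases n p.1 with h0 | ⟨c, h0, h1, h2⟩ | ⟨c, h0, h1, h2⟩ | h0
  · rw [stepProb_zero n p q h0] at h
    simp only [ne_eq, ite_eq_right_iff, not_forall] at h
    obtain ⟨⟨⟨i, hi⟩, _⟩, _⟩ := h
    exact ⟨i, lt_of_le_of_ne (hp i) (h0 i), hi⟩
  · rw [stepProb_one n p q c h0 h1 h2] at h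
    split_ifs at h with a1 a2 a3 a4
    · exact ⟨_, lt_of_le_of_ne (hp _) h1, a1.1⟩
    · exact ⟨_, lt_of_le_of_ne (hp _) h1, a2.1⟩
    · exact ⟨_, lt_of_le_of_ne (hp _) h2, a3.1⟩
    · exact ⟨_, lt_of_le_of_ne (hp _) h2, a4.1⟩
    · exact absurd rfl h
  · rw [stepProb_two n p q c h0 h1 h2] at h
    simp only [ne_eq, ite_eq_right_iff, not_forall] at h
    obtain ⟨⟨i, hi, hi2, _⟩, _⟩ := h
    exact ⟨i, hi, hi2⟩
  · exact absurd (stepProb_three n p q h0) h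

lemma ite4_le (A B C D : Prop) [Decidable A] [Decidable B] [Decidable C] [Decidable D]
    (a b c d : ℝ≥0∞) :
    (if A then a else if B then b else if C then c else if D then d else 0) ≤
      (if A then a else 0) + (if B then b else 0) + (if C then c else 0)
        + (if D then d else 0) := by
  by_cases hA : A
  · simp [hA, add_assoc]
  · by_cases hB : B
    · simp [hA, hB, add_assoc]
    · by_cases hC : C
      · simp [hA, hB, hC]
      · simp [hA, hB, hC]

lemma fin3_ne : ∀ j c : Fin 3, j ≠ c → j = c + 1 ∨ j = c + 2 := by decide

lemma step_exp (n : ℕ) (i : Fin 3) (p : (Fin 3 → ℕ) × ℤ) {l : ℝ} (hl : |l| ≤ 1/4) :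
    ∑' q, stepProb n p q * ENNReal.ofReal (exp (l * dinc n i p q))
      ≤ ENNReal.ofReal (exp (4 * l ^ 2)) := by
  have f0 : (1 : Fin 3) + 1 = 2 := rfl
  have f1 : (2 : Fin 3) + 1 = 0 := rfl
  have f2 : (1 : Fin 3) + 2 = 0 := rfl
  have f3 : (2 : Fin 3) + 2 = 1 := rfl
  rcases four_cases n p.1 with h0 | ⟨c, h0, h1, h2⟩ | ⟨c, h0, h1, h2⟩ | h0
  · refine atoms_exp n i p (ι := Fin 3 × Fin 3) (fun _ => 1/9)
      (fun k => (p.1 + e k.1, p.2 + (![-1, 0, 1] : Fin 3 → ℤ) k.2)) ?_ ?_ ?_ ?_ ?_ hl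
    · intro q
      rw [stepProb_zero n p q h0]
      split_ifs with hq
      · obtain ⟨⟨j, hj⟩, hs⟩ := hq
        obtain ⟨s, hs⟩ : ∃ s : Fin 3, q.2 = p.2 + (![-1, 0, 1] : Fin 3 → ℤ) s := by
          rcases hs with hs | hs | hs
          · exact ⟨0, by rw [hs]; simp; ring⟩
          · exact ⟨1, by rw [hs]; simp⟩
          · exact ⟨2, by rw [hs]; simp⟩
        have hq : q = (p.1 + e j, p.2 + (![-1, 0, 1] : Fin 3 → ℤ) s) := Prod.ext hj hs
        refine le_trans ?_ (Finset.single_le_sum (fun _ _ => zero_le) (Finset.mem_univ (j, s)))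
        rw [if_pos hq, sum_ninth]
      · exact zero_le
    · intro k; norm_num
    · simp
    · rintro ⟨j, s⟩
      have : drift n i p = 0 := by simp [drift, h0]
      rw [dinc, this]
      fin_cases i <;> fin_cases j <;> fin_cases s <;> simp [e, abs_le] <;> norm_num
    · have : drift n i p = 0 := by simp [drift, h0]
      simp only [dinc, this, Fintype.sum_prod_type, Fin.sum_univ_three]
      fin_cases i <;> simp [e] <;> norm_num
  · refine atoms_exp n i p (ι := Fin 4) ![2/9, 1/9, 4/9, 2/9]
      ![(p.1 + e (c+1), p.2 + 1), (p.1 + e (c+1), p.2 - 1), (p.1 + e (c+2), p.2),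
        (p.1 + e (c+2), p.2 + 1)] ?_ ?_ ?_ ?_ ?_ hl
    · intro q
      rw [stepProb_one n p q c h0 h1 h2]
      simp only [Fin.sum_univ_four, Prod.ext_iff, sum_ninth, sum_two_ninth, sum_four_ninth]
      simp only [Matrix.cons_val]
      exact ite4_le _ _ _ _ _ _ _ _
    · intro k; fin_cases k <;> simp <;> norm_num
    · simp [Fin.sum_univ_four]; norm_num
    · intro k
      unfold dinc drift
      fin_cases i <;> fin_cases c <;> simp [f0, f1, f2, f3] at h0 h1 h2 <;> fin_cases k <;>
        simp [e, abs_le, h0, h1, h2, f0, f1, f2, f3] <;> norm_num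
    · unfold dinc drift
      rw [Fin.sum_univ_four]
      fin_cases i <;> fin_cases c <;> simp [f0, f1, f2, f3] at h0 h1 h2 <;>
        simp [e, h0, h1, h2, f0, f1, f2, f3] <;> norm_num
  · refine atoms_exp n i p (ι := Unit) (fun _ => 1)
      (fun _ => (p.1 + e c, p.2 + 1)) ?_ ?_ ?_ ?_ ?_ hl
    · intro q
      rw [stepProb_two n p q c h0 h1 h2]
      by_cases hq : ∃ i : Fin 3, p.1 i < n ∧ q.1 = p.1 + e i ∧ q.2 = p.2 + 1
      · rw [if_pos hq]
        obtain ⟨j, hj, hj1, hj2⟩ := hq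
        have : j = c := by
          by_contra hne
          have : j = c + 1 ∨ j = c + 2 := fin3_ne j c hne
          rcases this with rfl | rfl <;> omega
        subst this
        have hq : q = (p.1 + e j, p.2 + 1) := Prod.ext hj1 hj2
        simp [hq]
      · rw [if_neg hq]
        exact zero_le
    · intro k; norm_num
    · simp
    · intro k
      unfold dinc drift
      fin_cases i <;> fin_cases c <;> simp [f0, f1, f2, f3] at h0 h1 h2 <;>
        simp [e, abs_le, h0, h1, h2, f0, f1, f2, f3] <;> norm_num
    · unfold dinc drift
      fin_cases i <;> fin_cases c <;> simp [f0, f1, f2, f3] at h0 h1 h2 <;>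
        simp [e, h0, h1, h2, f0, f1, f2, f3] <;> norm_num
  · simp [stepProb_three n p _ h0]

lemma ae_step {n : ℕ} {Ω : Type*} [MeasurableSpace Ω] {μ : Measure Ω}
    {NS : ℕ → Ω → (Fin 3 → ℕ) × ℤ} (h : IsGreedyProcess n μ NS) {t : ℕ} (ht : t < 3 * n) :
    ∀ᵐ ω ∂μ, stepProb n (NS t ω) (NS (t+1) ω) ≠ 0 := by
  have key := step_int h ht (fun _ => 1) (fun p q => if stepProb n p q = 0 then 1 else 0)
  simp only [one_mul, mul_ite, mul_one, mul_zero] at key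
  have z : ∀ p q, (if stepProb n p q = 0 then stepProb n p q else 0) = 0 := by
    intro p q; split_ifs with hh <;> simp [hh]
  simp only [z, tsum_zero, lintegral_zero] at key
  have hm : Measurable (fun ω => if stepProb n (NS t ω) (NS (t+1) ω) = 0 then (1:ℝ≥0∞) else 0) :=
    (measurable_of_countable
      (fun y : ((Fin 3 → ℕ) × ℤ) × ((Fin 3 → ℕ) × ℤ) =>
        if stepProb n y.1 y.2 = 0 then (1:ℝ≥0∞) else 0)).comp ((h.2.1 t).prodMk (h.2.1 (t+1)))
  rw [lintegral_eq_zero_iff hm] at key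
  filter_upwards [key] with ω hω
  intro h0
  simp [h0] at hω

lemma exp_moment {n : ℕ} {Ω : Type*} [MeasurableSpace Ω] {μ : Measure Ω}
    {NS : ℕ → Ω → (Fin 3 → ℕ) × ℤ} (h : IsGreedyProcess n μ NS) (i : Fin 3) {l : ℝ}
    (hl : |l| ≤ 1/4) (s k : ℕ) (hk : s + k ≤ 3 * n) :
    ∫⁻ ω, ENNReal.ofReal
      (exp (l * ∑ u ∈ Finset.Ico s (s + k), dinc n i (NS u ω) (NS (u+1) ω))) ∂μ
      ≤ ENNReal.ofReal (exp (4 * l ^ 2 * k)) := by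
  induction k with
  | zero => have := h.1; simp
  | succ k ih =>
    have key := step_int h (t := s + k) (by omega)
      (fun f => ENNReal.ofReal
        (exp (l * ∑ u ∈ Finset.Ico s (s + k), dinc n i (f u) (f (u+1)))))
      (fun p q => ENNReal.ofReal (exp (l * dinc n i p q)))
    have e1 : ∀ ω, ∑ u ∈ Finset.Ico s (s + k), dinc n i (NS (min u (s+k)) ω)
        (NS (min (u+1) (s+k)) ω) = ∑ u ∈ Finset.Ico s (s + k), dinc n i (NS u ω) (NS (u+1) ω) := by
      intro ω
      refine Finset.sum_congr rfl fun u hu => ?_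
      rw [Finset.mem_Ico] at hu
      rw [min_eq_left (by omega), min_eq_left (by omega)]
    simp only [e1] at key
    calc _ = ∫⁻ ω, ENNReal.ofReal
          (exp (l * ∑ u ∈ Finset.Ico s (s + k), dinc n i (NS u ω) (NS (u+1) ω))) *
          ENNReal.ofReal (exp (l * dinc n i (NS (s+k) ω) (NS (s+k+1) ω))) ∂μ := by
          refine lintegral_congr fun ω => ?_
          rw [← ENNReal.ofReal_mul (exp_pos _).le, ← exp_add, ← mul_add, ← add_assoc,
            Finset.sum_Ico_succ_top (by omega)]
      _ ≤ ∫⁻ ω, ENNReal.ofReal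
          (exp (l * ∑ u ∈ Finset.Ico s (s + k), dinc n i (NS u ω) (NS (u+1) ω))) *
          ENNReal.ofReal (exp (4 * l ^ 2)) ∂μ := by
          rw [key]
          refine lintegral_mono fun ω => ?_
          gcongr
          exact step_exp n i _ hl
      _ ≤ ENNReal.ofReal (exp (4 * l ^ 2 * k)) * ENNReal.ofReal (exp (4 * l ^ 2)) := by
          rw [lintegral_mul_const' _ _ ENNReal.ofReal_ne_top]
          gcongr
          exact ih (by omega)
      _ = _ := by
          rw [← ENNReal.ofReal_mul (exp_pos _).le, ← exp_add]
          push_cast; ring_nf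

/-- Deterministic pathwise comparison. -/
lemma pathwise {n : ℕ} (hn : 1 ≤ n) (f : ℕ → (Fin 3 → ℕ) × ℤ) (h0 : f 0 = (fun _ => 0, 0))
    (hs : ∀ t < 3 * n, stepProb n (f t) (f (t+1)) ≠ 0) (T : ℕ) (hT : T ≤ 3 * n)
    (X : Fin 3 → ℝ) (hX : ∀ i, X i = ((f T).1 i : ℝ) - (T : ℝ) / 3) :
    ∃ i, |((f (3 * n)).2 : ℝ) - ((f T).2 : ℝ)
            - max (X 0 + 2 * X 1) (max (X 1 + 2 * X 2) (X 2 + 2 * X 0))|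
      ≤ |∑ u ∈ Finset.Ico T (3 * n), dinc n i (f u) (f (u+1))| := by
  have inv : ∀ t ≤ 3 * n, (∀ i, (f t).1 i ≤ n) ∧ (f t).1 0 + (f t).1 1 + (f t).1 2 = t := by
    intro t
    induction t with
    | zero => intro _; simp [h0]
    | succ t ih =>
      intro ht
      obtain ⟨a, b⟩ := ih (by omega)
      obtain ⟨j, hj, hq⟩ := support_step a (hs t (by omega))
      rw [hq]
      constructor
      · intro i
        have := a i
        simp only [Pi.add_apply, e]
        split_ifs with hh
        · subst hh; omega
        · omega
      · fin_cases j <;> simp [e] <;> omega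
  have mono : ∀ t < 3 * n, ∀ i, (f t).1 i ≤ (f (t+1)).1 i := by
    intro t ht i
    obtain ⟨j, hj, hq⟩ := support_step (inv t ht.le).1 (hs t ht)
    rw [hq]; simp
  have tel : ∀ i k, T + k ≤ 3 * n →
      ∑ u ∈ Finset.Ico T (T + k), dinc n i (f u) (f (u+1)) =
      (((f (T+k)).2 : ℝ) - (f T).2) - (((f (T+k)).1 (i+1) : ℝ) - (f T).1 (i+1))
        + (((f (T+k)).1 i : ℝ) - (f T).1 i) - ∑ u ∈ Finset.Ico T (T + k), drift n i (f u) := by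
    intro i k
    induction k with
    | zero => intro _; simp
    | succ k ih =>
      intro hk
      rw [← add_assoc, Finset.sum_Ico_succ_top (by omega), Finset.sum_Ico_succ_top (by omega),
        ih (by omega), dinc]
      ring
  have hend : ∀ i, (f (3*n)).1 i = n := by
    obtain ⟨a, b⟩ := inv (3*n) le_rfl
    have a0 := a 0
    have a1 := a 1
    have a2 := a 2
    intro i
    fin_cases i <;> simp <;> omega
  have tel' : ∀ i, ∑ u ∈ Finset.Ico T (3*n), dinc n i (f u) (f (u+1)) =
      (((f (3*n)).2 : ℝ) - (f T).2) - (X i - X (i+1)) - ∑ u ∈ Finset.Ico T (3*n), drift n i (f u) := by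
    intro i
    have := tel i (3*n - T) (by omega)
    rw [show T + (3*n - T) = 3*n by omega, hend, hend] at this
    rw [this, hX, hX]; ring
  have hsum : X 0 + X 1 + X 2 = 0 := by
    have : (((f T).1 0 : ℝ) + (f T).1 1 + (f T).1 2) = T := by exact_mod_cast (inv T hT).2
    rw [hX, hX, hX]; linarith
  obtain ⟨j, hj⟩ : ∃ j : Fin 3, (f (3*n-1)).1 (j + 1) ≠ n := by
    by_contra hcon
    push Not at hcon
    have c0 := hcon 0
    have c1 := hcon 1
    have c2 := hcon 2
    have f0 : (1 : Fin 3) + 1 = 2 := rfl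
    have f1 : (2 : Fin 3) + 1 = 0 := rfl
    simp [f0, f1] at c0 c1 c2
    have := (inv (3*n-1) (by omega)).2
    omega
  have hlt : ∀ k < 3 * n, (f (3*n-1-k)).1 (j+1) < n := by
    intro k
    induction k with
    | zero => intro _; exact lt_of_le_of_ne ((inv _ (by omega)).1 _) hj
    | succ k ih =>
      intro hk
      have := mono (3*n-1-(k+1)) (by omega) (j+1)
      rw [show 3*n-1-(k+1)+1 = 3*n-1-k by omega] at this
      exact lt_of_le_of_lt this (ih (by omega))
  have hdj : ∑ u ∈ Finset.Ico T (3*n), drift n j (f u) = 0 := by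
    refine Finset.sum_eq_zero fun u hu => ?_
    rw [Finset.mem_Ico] at hu
    have := hlt (3*n-1-u) (by omega)
    rw [show 3*n-1-(3*n-1-u) = u by omega] at this
    simp [drift, this.ne]
  have f0 : (1 : Fin 3) + 1 = 2 := rfl
  have f1 : (2 : Fin 3) + 1 = 0 := rfl
  set M := max (X 0 + 2 * X 1) (max (X 1 + 2 * X 2) (X 2 + 2 * X 0)) with hM
  have m1 : X 0 + 2 * X 1 ≤ M := le_max_left _ _
  have m2 : X 1 + 2 * X 2 ≤ M := (le_max_left _ _).trans (le_max_right _ _)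
  have m3 : X 2 + 2 * X 0 ≤ M := (le_max_right _ _).trans (le_max_right _ _)
  have hle : ∀ i, X i - X (i+1) ≤ M := by
    intro i
    fin_cases i <;> simp [f0, f1] <;> linarith
  have hex : ∃ i, X i - X (i+1) = M := by
    have : M = X 0 + 2 * X 1 ∨ M = X 1 + 2 * X 2 ∨ M = X 2 + 2 * X 0 := by
      rw [hM]
      rcases max_choice (X 0 + 2 * X 1) (max (X 1 + 2 * X 2) (X 2 + 2 * X 0)) with h | h
      · exact Or.inl h
      · rw [h]
        rcases max_choice (X 1 + 2 * X 2) (X 2 + 2 * X 0) with h | h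
        · exact Or.inr (Or.inl h)
        · exact Or.inr (Or.inr h)
    rcases this with h | h | h
    · exact ⟨1, by rw [f0]; linarith⟩
    · exact ⟨2, by rw [f1]; linarith⟩
    · exact ⟨0, by rw [zero_add]; linarith⟩
  obtain ⟨i, hi⟩ := hex
  rcases le_total 0 (((f (3 * n)).2 : ℝ) - ((f T).2 : ℝ) - M) with hQ | hQ
  · refine ⟨j, ?_⟩
    rw [tel' j, hdj, abs_of_nonneg hQ]
    refine le_trans ?_ (le_abs_self _)
    linarith [hle j]
  · refine ⟨i, ?_⟩
    rw [tel' i, abs_of_nonpos hQ, hi]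
    refine le_trans ?_ (neg_le_abs _)
    have : 0 ≤ ∑ u ∈ Finset.Ico T (3*n), drift n i (f u) :=
      Finset.sum_nonneg fun u _ => drift_nonneg n i _
    linarith

lemma rpow_le_exp {p : ℝ} (hp : 1 ≤ p) : ∃ K : ℝ, 0 ≤ K ∧ ∀ x : ℝ, 0 ≤ x → x ^ p ≤ K * exp x := by
  refine ⟨1 + (⌈p⌉₊).factorial, by positivity, fun x hx => ?_⟩
  have h1 : x ^ p ≤ 1 + x ^ ⌈p⌉₊ := by
    rcases le_total x 1 with h | h
    · have := Real.rpow_le_one hx h (by linarith : 0 ≤ p)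
      have : 0 ≤ x ^ ⌈p⌉₊ := by positivity
      linarith
    · have := Real.rpow_le_rpow_of_exponent_le h (Nat.le_ceil p)
      rw [Real.rpow_natCast] at this
      linarith
  have h2 := Real.pow_div_factorial_le_exp x hx ⌈p⌉₊
  rw [div_le_iff₀ (by positivity)] at h2
  have h3 : 1 ≤ exp x := Real.one_le_exp hx
  nlinarith

lemma pair_meas_s3 {Ω β : Type*} [MeasurableSpace Ω] [MeasurableSpace β] [Countable β]
    [MeasurableSingletonClass β] (g : β → β → ℝ)
    {Y : ℕ → Ω → β} (h : ∀ t, Measurable (Y t)) (s : Finset ℕ) :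
    Measurable (fun ω => ∑ u ∈ s, g (Y u ω) (Y (u+1) ω)) := by
  refine Finset.measurable_fun_sum _ fun u _ => ?_
  have h1 : Measurable (fun y : β × β => g y.1 y.2) :=
    measurable_of_countable _
  exact h1.comp ((h u).prodMk (h (u+1)))

/-- Lemma L1: with `T₀ = 3n − 3⌈n^{2/3}⌉` and `X_i = N_{T₀,i} − T₀/3`,
for every `p ∈ [1,∞)` there is a constant `C_p` independent of `n` with
`E|S(3n) − S(T₀) − max(X₁+2X₂, X₂+2X₃, X₃+2X₁)|^p ≤ C_p n^{p/3}`. -/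
theorem greedy_score_endgame_approx
    (Ω : ℕ → Type*) [∀ n, MeasurableSpace (Ω n)] (μ : ∀ n, Measure (Ω n))
    (NS : ∀ n, ℕ → Ω n → (Fin 3 → ℕ) × ℤ)
    (hproc : ∀ n, 1 ≤ n → IsGreedyProcess n (μ n) (NS n))
    (T0 : ℕ → ℕ) (hT0 : ∀ n, T0 n = 3 * n - 3 * ⌈(n : ℝ) ^ ((2 : ℝ) / 3)⌉₊)
    (X : ∀ n, Fin 3 → Ω n → ℝ)
    (hX : ∀ n i ω, X n i ω = ((NS n (T0 n) ω).1 i : ℝ) - (T0 n : ℝ) / 3) :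
    ∀ p : ℝ, 1 ≤ p → ∃ C : ℝ, ∀ n : ℕ, 1 ≤ n →
      ∫⁻ ω, ENNReal.ofReal
          (|((NS n (3 * n) ω).2 : ℝ) - ((NS n (T0 n) ω).2 : ℝ)
            - max (X n 0 ω + 2 * X n 1 ω)
                (max (X n 1 ω + 2 * X n 2 ω) (X n 2 ω + 2 * X n 0 ω))| ^ p) ∂(μ n)
        ≤ ENNReal.ofReal (C * (n : ℝ) ^ (p / 3)) := by

  intro p hp
  obtain ⟨K, hK, hKx⟩ := rpow_le_exp hp
  refine ⟨6 * K * (4 * 2 ^ ((1:ℝ)/2)) ^ p * exp 1, fun n hn => ?_⟩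
  have hP := hproc n hn
  have hprob := hP.1
  set m : ℕ := ⌈(n : ℝ) ^ ((2 : ℝ) / 3)⌉₊ with hm
  have hn1 : (1:ℝ) ≤ n := by exact_mod_cast hn
  have hb1 : (1:ℝ) ≤ (n:ℝ) ^ ((2:ℝ)/3) := Real.one_le_rpow hn1 (by norm_num)
  have hm1 : 1 ≤ m := Nat.one_le_ceil_iff.2 (by linarith)
  have hm1' : (1:ℝ) ≤ m := by exact_mod_cast hm1
  have hmn : m ≤ n := by
    rw [hm, Nat.ceil_le]
    calc (n:ℝ) ^ ((2:ℝ)/3) ≤ (n:ℝ) ^ (1:ℝ) := Real.rpow_le_rpow_of_exponent_le hn1 (by norm_num)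
      _ = n := Real.rpow_one _
  have hm2 : (m:ℝ) ≤ 2 * (n:ℝ) ^ ((2:ℝ)/3) := by
    have := Nat.ceil_lt_add_one (by linarith : 0 ≤ (n:ℝ) ^ ((2:ℝ)/3))
    linarith
  have hT : T0 n = 3 * n - 3 * m := hT0 n
  have hTle : T0 n ≤ 3 * n := by omega
  have hTk : T0 n + 3 * m = 3 * n := by omega
  -- the scale
  set r : ℝ := 4 * (m:ℝ) ^ ((1:ℝ)/2) with hr
  have hsq1 : (1:ℝ) ≤ (m:ℝ) ^ ((1:ℝ)/2) := Real.one_le_rpow hm1' (by norm_num)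
  have hr4 : 4 ≤ r := by rw [hr]; linarith
  have hr0 : 0 < r := by linarith
  have hrsq : r ^ 2 = 16 * m := by
    rw [hr, mul_pow, ← Real.rpow_natCast, ← Real.rpow_natCast, ← Real.rpow_mul (by positivity)]
    norm_num
  have hl : |1 / r| ≤ 1 / 4 := by
    rw [abs_of_pos (by positivity)]
    exact one_div_le_one_div_of_le (by norm_num) hr4
  have hl' : |-(1 / r)| ≤ 1 / 4 := by rwa [abs_neg]
  have hexpo : 4 * (1 / r) ^ 2 * ((3 * m : ℕ) : ℝ) ≤ 1 := by
    rw [div_pow, hrsq]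
    push_cast
    have : (m:ℝ) ≠ 0 := by positivity
    field_simp
    norm_num
  let D : Fin 3 → Ω n → ℝ := fun i ω =>
    ∑ u ∈ Finset.Ico (T0 n) (3 * n), dinc n i (NS n u ω) (NS n (u+1) ω)
  have hmom : ∀ i, ∀ l : ℝ, |l| ≤ 1/4 → 4 * l ^ 2 * ((3 * m : ℕ) : ℝ) ≤ 1 →
      ∫⁻ ω, ENNReal.ofReal (exp (l * D i ω)) ∂(μ n) ≤ ENNReal.ofReal (exp 1) := by
    intro i l h1 h2
    have := exp_moment hP i h1 (T0 n) (3 * m) (by omega)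
    rw [hTk] at this
    exact this.trans (ENNReal.ofReal_le_ofReal (exp_le_exp.2 h2))
  have hDmeas : ∀ i, Measurable (D i) := by
    intro i
    exact pair_meas_s3 (dinc n i) hP.2.1 _
  have hEmeas : ∀ (i : Fin 3) (l : ℝ), Measurable (fun ω => ENNReal.ofReal (exp (l * D i ω))) := by
    intro i l
    exact ENNReal.measurable_ofReal.comp (Real.measurable_exp.comp ((hDmeas i).const_mul l))
  have hbound : ∀ x : ℝ, ENNReal.ofReal (|x| ^ p) ≤ ENNReal.ofReal (r ^ p * K) *
      (ENNReal.ofReal (exp (1 / r * x)) + ENNReal.ofReal (exp (-(1 / r) * x))) := by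
    intro x
    rw [← ENNReal.ofReal_add (exp_pos _).le (exp_pos _).le, ← ENNReal.ofReal_mul (by positivity)]
    refine ENNReal.ofReal_le_ofReal ?_
    have h1 : |x| ^ p = r ^ p * (|x| / r) ^ p := by
      rw [← Real.mul_rpow hr0.le (by positivity)]
      congr 1; field_simp
    have h2 : exp (|x| / r) ≤ exp (1 / r * x) + exp (-(1 / r) * x) := by
      rcases le_total 0 x with h | h
      · rw [abs_of_nonneg h, show x / r = 1 / r * x by ring]
        linarith [exp_pos (-(1 / r) * x)]
      · rw [abs_of_nonpos h, show -x / r = -(1 / r) * x by ring]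
        linarith [exp_pos ((1 / r) * x)]
    rw [h1, mul_assoc]
    refine mul_le_mul_of_nonneg_left ?_ (by positivity)
    exact (hKx _ (by positivity)).trans (mul_le_mul_of_nonneg_left h2 hK)
  have hae0 : ∀ᵐ ω ∂(μ n), NS n 0 ω = (fun _ => 0, 0) := by
    have hms : MeasurableSet {ω | NS n 0 ω = (fun _ => 0, 0)} :=
      hP.2.1 0 (measurableSet_singleton _)
    exact (prob_compl_eq_zero_iff hms).2 hP.2.2.1
  have hae : ∀ᵐ ω ∂(μ n), ∀ t, t < 3 * n → stepProb n (NS n t ω) (NS n (t+1) ω) ≠ 0 := by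
    rw [ae_all_iff]
    intro t
    by_cases ht : t < 3 * n
    · filter_upwards [ae_step hP ht] with ω hω _ using hω
    · exact Eventually.of_forall fun ω h => absurd h ht
  calc _ ≤ ∫⁻ ω, ∑ i : Fin 3, ENNReal.ofReal (r ^ p * K) *
      (ENNReal.ofReal (exp (1 / r * D i ω)) + ENNReal.ofReal (exp (-(1 / r) * D i ω))) ∂(μ n) := by
        refine lintegral_mono_ae ?_
        filter_upwards [hae0, hae] with ω h0 hs
        obtain ⟨i, hi⟩ := pathwise hn (fun t => NS n t ω) h0 hs (T0 n) hTle
          (fun i => X n i ω) (fun i => hX n i ω)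
        refine le_trans ?_ (Finset.single_le_sum (fun _ _ => zero_le) (Finset.mem_univ i))
        refine le_trans ?_ (hbound (D i ω))
        exact ENNReal.ofReal_le_ofReal (Real.rpow_le_rpow (abs_nonneg _) hi (by linarith))
    _ = ∑ i : Fin 3, ENNReal.ofReal (r ^ p * K) *
        (∫⁻ ω, ENNReal.ofReal (exp (1 / r * D i ω)) ∂(μ n) +
          ∫⁻ ω, ENNReal.ofReal (exp (-(1 / r) * D i ω)) ∂(μ n)) := by
        have hsm : ∀ i, Measurable (fun ω => ENNReal.ofReal (exp (1 / r * D i ω)) +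
            ENNReal.ofReal (exp (-(1 / r) * D i ω))) := fun i => (hEmeas i _).add (hEmeas i _)
        rw [lintegral_finsetSum _ fun i _ => (hsm i).const_mul _]
        refine Finset.sum_congr rfl fun i _ => ?_
        rw [lintegral_const_mul _ (hsm i), lintegral_add_left (hEmeas i _)]
    _ ≤ ∑ i : Fin 3, ENNReal.ofReal (r ^ p * K) *
        (ENNReal.ofReal (exp 1) + ENNReal.ofReal (exp 1)) := by
        refine Finset.sum_le_sum fun i _ => ?_
        gcongr
        · exact hmom i _ hl hexpo
        · exact hmom i _ hl' (by rwa [neg_sq])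
    _ = ENNReal.ofReal (6 * K * exp 1 * r ^ p) := by
        rw [← ENNReal.ofReal_add (exp_pos _).le (exp_pos _).le, ← ENNReal.ofReal_mul (by positivity),
          ← ENNReal.ofReal_sum_of_nonneg (fun _ _ => by positivity)]
        congr 1
        simp
        ring
    _ ≤ _ := by
        refine ENNReal.ofReal_le_ofReal ?_
        have hrle : r ≤ (4 * 2 ^ ((1:ℝ)/2)) * (n:ℝ) ^ ((1:ℝ)/3) := by
          rw [hr, mul_assoc]
          refine mul_le_mul_of_nonneg_left ?_ (by norm_num)
          calc (m:ℝ) ^ ((1:ℝ)/2) ≤ (2 * (n:ℝ) ^ ((2:ℝ)/3)) ^ ((1:ℝ)/2) :=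
                Real.rpow_le_rpow (by positivity) hm2 (by norm_num)
            _ = _ := by
                rw [Real.mul_rpow (by norm_num) (by positivity), ← Real.rpow_mul (by positivity)]
                norm_num
        have h1 : r ^ p ≤ (4 * 2 ^ ((1:ℝ)/2)) ^ p * (n:ℝ) ^ (p/3) := by
          calc r ^ p ≤ ((4 * 2 ^ ((1:ℝ)/2)) * (n:ℝ) ^ ((1:ℝ)/3)) ^ p :=
                Real.rpow_le_rpow hr0.le hrle (by linarith)
            _ = _ := by
                rw [Real.mul_rpow (by positivity) (by positivity), ← Real.rpow_mul (by positivity)]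
                congr 2; ring
        calc _ ≤ 6 * K * exp 1 * ((4 * 2 ^ ((1:ℝ)/2)) ^ p * (n:ℝ) ^ (p/3)) :=
              mul_le_mul_of_nonneg_left h1 (by positivity)
          _ = _ := by ring

end RPSGreedy
end

section
/- (Theorem T2(iv).) Let R be a random variable with probability density (1/2)·r·e^{−r²/4} on (0,∞) (a Rayleigh distribution), let Θ be uniformly distributed on (0, π/3), and let R and Θ be independent. Then R·cos Θ has the same distribution as max(Z_1, Z_2, Z_3). -/
open MeasureTheory ProbabilityTheory Real Filter
open scoped ENNReal Topology

lemma joint_law {Ω₂ : Type*} [MeasurableSpace Ω₂] (P₂ : Measure Ω₂) [IsProbabilityMeasure P₂]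
    (X Y : Ω₂ → ℝ) (hX : Measurable X) (hY : Measurable Y)
    (h : ∀ a b : ℝ, P₂.map (fun ω => a * X ω + b * Y ω)
        = gaussianReal 0 (Real.toNNReal (2 * (a ^ 2 + b ^ 2)))) :
    P₂.map (fun ω => (X ω, Y ω)) = (gaussianReal 0 2).prod (gaussianReal 0 2) := by
  have : IsProbabilityMeasure (P₂.map (fun ω => (X ω, Y ω))) :=
    Measure.isProbabilityMeasure_map (by fun_prop)
  apply Measure.ext_of_charFunDual
  ext L
  have hL : ∀ x y : ℝ, L (x, y) = L (1, 0) * x + L (0, 1) * y := by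
    intro x y
    have : (x, y) = x • ((1 : ℝ), (0 : ℝ)) + y • ((0 : ℝ), (1 : ℝ)) := by simp
    rw [this, map_add, map_smul, map_smul]
    simp [mul_comm]
  have key : ∀ c : ℝ, (gaussianReal 0 2).map (fun x => c * x) =
      gaussianReal 0 (Real.toNNReal (2 * c ^ 2)) := by
    intro c
    rw [gaussianReal_map_const_mul]
    congr 1
    · simp
    · ext
      rw [Real.coe_toNNReal _ (by positivity)]
      simp [mul_comm]
  rw [charFunDual_prod, charFunDual_eq_charFun_map_one, charFunDual_eq_charFun_map_one,
    charFunDual_eq_charFun_map_one, Measure.map_map (by fun_prop) (by fun_prop)]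
  have e1 : (L ∘ fun ω => (X ω, Y ω)) = fun ω => L (1, 0) * X ω + L (0, 1) * Y ω := by
    ext ω; exact hL _ _
  have e2 : ⇑(L.comp (.inl ℝ ℝ ℝ)) = fun x => L (1, 0) * x := by
    ext x; simp [hL x 0]
  have e3 : ⇑(L.comp (.inr ℝ ℝ ℝ)) = fun x => L (0, 1) * x := by
    ext x; simp [hL 0 x]
  rw [e1, e2, e3, h, key, key, charFun_gaussianReal, charFun_gaussianReal, charFun_gaussianReal,
    ← Complex.exp_add]
  congr 1
  rw [Real.coe_toNNReal _ (by positivity), Real.coe_toNNReal _ (by positivity),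
    Real.coe_toNNReal _ (by positivity)]
  push_cast
  ring

lemma max_cos_mid {θ : ℝ} (h1 : -(π / 3) ≤ θ) (h2 : θ ≤ π / 3) :
    max (cos θ) (max (-(cos θ) / 2 + √3 / 2 * sin θ) (-(cos θ) / 2 - √3 / 2 * sin θ)) = cos θ := by
  have e1 : -(cos θ) / 2 + √3 / 2 * sin θ = cos (2 * π / 3 - θ) := by
    have : 2 * π / 3 - θ = π - (θ + π / 3) := by ring
    rw [this, cos_pi_sub, cos_add, cos_pi_div_three, sin_pi_div_three]; ring
  have e2 : -(cos θ) / 2 - √3 / 2 * sin θ = cos (2 * π / 3 + θ) := by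
    have : 2 * π / 3 + θ = π - (π / 3 - θ) := by ring
    rw [this, cos_pi_sub, cos_sub, cos_pi_div_three, sin_pi_div_three]; ring
  have hp := pi_pos
  apply max_eq_left
  rw [e1, e2, ← cos_abs θ]
  have ha : |θ| ≤ π / 3 := abs_le.2 ⟨h1, h2⟩
  apply max_le
  · exact cos_le_cos_of_nonneg_of_le_pi (abs_nonneg _) (by linarith) (by linarith)
  · exact cos_le_cos_of_nonneg_of_le_pi (abs_nonneg _) (by linarith) (by linarith)

/-- the maximum of the three cosines -/
noncomputable def mcos (θ : ℝ) : ℝ :=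
  max (cos θ) (max (-(cos θ) / 2 + √3 / 2 * sin θ) (-(cos θ) / 2 - √3 / 2 * sin θ))

lemma mcos_mid {θ : ℝ} (h1 : -(π / 3) ≤ θ) (h2 : θ ≤ π / 3) : mcos θ = cos θ := max_cos_mid h1 h2

lemma mcos_add (θ : ℝ) : mcos (θ + 2 * π / 3) = mcos θ := by
  have hc : cos (2 * π / 3) = -1/2 := by
    have : 2 * π / 3 = π - π / 3 := by ring
    rw [this, cos_pi_sub, cos_pi_div_three]; ring
  have hs : sin (2 * π / 3) = √3/2 := by
    have : 2 * π / 3 = π - π / 3 := by ring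
    rw [this, sin_pi_sub, sin_pi_div_three]
  have h3 : √3 * √3 = 3 := mul_self_sqrt (by norm_num)
  unfold mcos
  rw [cos_add, sin_add, hc, hs]
  have e1 : cos θ * (-1/2) - sin θ * (√3/2) = -(cos θ) / 2 - √3 / 2 * sin θ := by ring
  have e2 : -(cos θ * (-1/2) - sin θ * (√3/2)) / 2 + √3 / 2 * (sin θ * (-1/2) + cos θ * (√3/2))
     = cos θ := by linear_combination (cos θ / 4) * h3
  have e3 : -(cos θ * (-1/2) - sin θ * (√3/2)) / 2 - √3 / 2 * (sin θ * (-1/2) + cos θ * (√3/2))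
     = -(cos θ) / 2 + √3 / 2 * sin θ := by linear_combination (-cos θ / 4) * h3
  rw [e2, e3, e1, max_comm, max_assoc]

@[fun_prop]
lemma measurable_mcos : Measurable mcos := by unfold mcos; fun_prop

lemma lint_shift (f : ℝ → ℝ≥0∞) (a b c : ℝ) (hf : ∀ x, f (x + c) = f x) :
    ∫⁻ x in Set.Ioo (a + c) (b + c), f x = ∫⁻ x in Set.Ioo a b, f x := by
  have := (measurePreserving_add_right (volume : Measure ℝ) c).setLIntegral_comp_preimage_emb
    (measurableEmbedding_addRight c) f (Set.Ioo (a + c) (b + c))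
  rw [← this]
  simp [hf]

lemma lint_split (f : ℝ → ℝ≥0∞) {a b c : ℝ} (h1 : a < b) (h2 : b < c) :
    ∫⁻ x in Set.Ioo a c, f x = (∫⁻ x in Set.Ioo a b, f x) + ∫⁻ x in Set.Ioo b c, f x := by
  rw [← Set.Ioc_union_Ioo_eq_Ioo h1.le h2,
    lintegral_union measurableSet_Ioo, setLIntegral_congr (Ioo_ae_eq_Ioc (a := a) (b := b))]
  rw [Set.disjoint_left]
  intro x hx hx'
  exact absurd hx.2 (not_le.2 hx'.1)

lemma lint_angle (F : ℝ → ℝ≥0∞) :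
    ∫⁻ θ in Set.Ioo (-π) π, F (mcos θ) = 6 * ∫⁻ θ in Set.Ioo 0 (π / 3), F (cos θ) := by
  have hp := pi_pos
  have hper : ∀ x, F (mcos (x + 2 * π / 3)) = F (mcos x) := fun x => by rw [mcos_add]
  rw [lint_split _ (show -π < -(π/3) by linarith) (show -(π/3) < π by linarith),
    lint_split _ (show -(π/3) < π/3 by linarith) (show π/3 < π by linarith)]
  have s1 := lint_shift (fun x => F (mcos x)) (-π) (-(π/3)) (2 * π / 3) hper
  have s2 := lint_shift (fun x => F (mcos x)) (-(π/3)) (π/3) (2 * π / 3) hper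
  rw [show -π + 2 * π / 3 = -(π/3) by ring, show -(π/3) + 2 * π / 3 = π/3 by ring] at s1
  rw [show π/3 + 2 * π / 3 = π by ring, show -(π/3) + 2 * π / 3 = π/3 by ring] at s2
  have m : ∫⁻ θ in Set.Ioo (-(π/3)) (π/3), F (mcos θ) = ∫⁻ θ in Set.Ioo (-(π/3)) (π/3), F (cos θ) := by
    refine setLIntegral_congr_fun measurableSet_Ioo fun x hx => ?_
    simp only [mcos_mid hx.1.le hx.2.le]
  have n : ∫⁻ θ in Set.Ioo (-(π/3)) 0, F (cos θ) = ∫⁻ θ in Set.Ioo 0 (π / 3), F (cos θ) := by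
    have := (Measure.measurePreserving_neg (volume : Measure ℝ)).setLIntegral_comp_preimage_emb
      (MeasurableEquiv.neg ℝ).measurableEmbedding (fun x => F (cos x)) (Set.Ioo 0 (π / 3))
    rw [← this]
    simp
  rw [← s1, s2, m, lint_split _ (show -(π/3) < 0 by linarith) (show 0 < π/3 by linarith), n]
  ring

lemma lint_gauss (f : ℝ → ℝ≥0∞) (hf : Measurable f) :
    ∫⁻ p : ℝ × ℝ, f (max p.1 (max (-p.1 / 2 + √3 / 2 * p.2) (-p.1 / 2 - √3 / 2 * p.2)))
      ∂((gaussianReal 0 2).prod (gaussianReal 0 2)) =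
    ∫⁻ r in Set.Ioi (0 : ℝ), ENNReal.ofReal (1 / 2 * r * Real.exp (-r ^ 2 / 4)) *
      (ENNReal.ofReal (3 / π) * ∫⁻ θ in Set.Ioo 0 (π / 3), f (r * cos θ)) := by
  have hp := pi_pos
  have h2 : (2 : NNReal) ≠ 0 := by norm_num
  rw [gaussianReal_of_var_ne_zero _ h2, prod_withDensity (by fun_prop) (by fun_prop),
    lintegral_withDensity_eq_lintegral_mul _ (by fun_prop) (by fun_prop),
    ← Measure.volume_eq_prod, ← lintegral_comp_polarCoord_symm]
  have hpt : ∀ p ∈ polarCoord.target, ENNReal.ofReal p.1 • (((fun z : ℝ × ℝ => gaussianPDF 0 2 z.1 * gaussianPDF 0 2 z.2) *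
      fun p : ℝ × ℝ => f (max p.1 (max (-p.1 / 2 + √3 / 2 * p.2) (-p.1 / 2 - √3 / 2 * p.2)))) (polarCoord.symm p))
      = ENNReal.ofReal (1 / (4 * π) * p.1 * Real.exp (-p.1 ^ 2 / 4)) * f (p.1 * mcos p.2) := by
    rintro ⟨r, θ⟩ ⟨hr, -⟩
    have hr' : 0 < r := hr
    simp only [polarCoord_symm_apply, Pi.mul_apply, smul_eq_mul, gaussianPDF]
    rw [← ENNReal.ofReal_mul (gaussianPDFReal_nonneg _ _ _), ← mul_assoc, ← ENNReal.ofReal_mul hr'.le]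
    congr 2
    · simp only [gaussianPDFReal, NNReal.coe_ofNat]
      have h4 : √(2 * π * 2) * √(2 * π * 2) = 4 * π := by
        rw [mul_self_sqrt (by positivity)]; ring
      have he : Real.exp (-(r * cos θ - 0) ^ 2 / (2 * 2)) * Real.exp (-(r * sin θ - 0) ^ 2 / (2 * 2))
          = Real.exp (-r ^ 2 / 4) := by
        rw [← Real.exp_add]
        congr 1
        linear_combination (-r ^ 2 / 4) * sin_sq_add_cos_sq θ
      rw [mul_mul_mul_comm, he, ← mul_inv, h4]
      ring
    · unfold mcos
      rw [mul_max_of_nonneg _ _ hr'.le, mul_max_of_nonneg _ _ hr'.le]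
      congr 2 <;> ring
  rw [setLIntegral_congr_fun polarCoord.open_target.measurableSet hpt, polarCoord_target,
    Measure.volume_eq_prod, setLIntegral_prod _ (by fun_prop)]
  refine setLIntegral_congr_fun measurableSet_Ioi fun r hr => ?_
  have hr' : 0 < r := hr
  simp only
  rw [lintegral_const_mul _ (by fun_prop), lint_angle (fun s => f (r * s)), ← mul_assoc, ← mul_assoc]
  congr 1
  rw [← ENNReal.ofReal_mul (by positivity), ← ENNReal.ofReal_ofNat, ← ENNReal.ofReal_mul (by positivity)]
  congr 1
  field_simp
  norm_num

/-- Theorem T2(iv): if `R` has density `(1/2)·r·exp(−r²/4)` on `(0,∞)` and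
`Θ` is uniform on `(0, π/3)`, independent of `R`, then `R·cos Θ` has the same distribution as
`max(Z₁,Z₂,Z₃)`, where `(Z₁,Z₂,Z₃)` is a centered Gaussian vector with covariance matrix
`[[2,−1,−1],[−1,2,−1],[−1,−1,2]]`. -/
theorem max_gaussian_repr_polar
    {Ω₁ : Type*} [MeasurableSpace Ω₁] (P₁ : Measure Ω₁) [IsProbabilityMeasure P₁]
    (R Θ : Ω₁ → ℝ) (hRm : Measurable R) (hΘm : Measurable Θ)
    (hR : P₁.map R = volume.withDensity
        (fun r => if 0 < r then ENNReal.ofReal (1 / 2 * r * Real.exp (-r ^ 2 / 4)) else 0))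
    (hΘ : P₁.map Θ = (ENNReal.ofReal (3 / π)) • volume.restrict (Set.Ioo 0 (π / 3)))
    (hindep : IndepFun R Θ P₁)
    {Ω₂ : Type*} [MeasurableSpace Ω₂] (P₂ : Measure Ω₂) [IsProbabilityMeasure P₂]
    (Z1 Z2 Z3 : Ω₂ → ℝ)
    (hZ1 : Measurable Z1) (hZ2 : Measurable Z2) (hZ3 : Measurable Z3)
    (hZ : ∀ a b c : ℝ, P₂.map (fun ω => a * Z1 ω + b * Z2 ω + c * Z3 ω)
        = gaussianReal 0 (Real.toNNReal
            (2 * (a ^ 2 + b ^ 2 + c ^ 2) - 2 * (a * b + a * c + b * c)))) :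
    P₁.map (fun ω => R ω * Real.cos (Θ ω))
      = P₂.map (fun ω => max (Z1 ω) (max (Z2 ω) (Z3 ω))) := by
  have hp := pi_pos
  have h3 : √3 * √3 = 3 := mul_self_sqrt (by norm_num)
  have h30 : √3 ≠ 0 := by positivity
  -- the sum vanishes almost surely
  have hsum : ∀ᵐ ω ∂P₂, Z1 ω + Z2 ω + Z3 ω = 0 := by
    have h := hZ 1 1 1
    norm_num at h
    have hm : Measurable (fun ω => Z1 ω + Z2 ω + Z3 ω) := by fun_prop
    have : ∀ᵐ x ∂(P₂.map (fun ω => Z1 ω + Z2 ω + Z3 ω)), x = 0 := by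
      rw [h, ae_dirac_eq]; simp
    exact ae_of_ae_map hm.aemeasurable this
  have hlaw := joint_law P₂ Z1 (fun ω => (Z2 ω - Z3 ω) / √3) hZ1 (by fun_prop) (by
    intro a b
    have := hZ a (b / √3) (-(b / √3))
    have e : (fun ω => a * Z1 ω + b * ((Z2 ω - Z3 ω) / √3)) =
        fun ω => a * Z1 ω + (b / √3) * Z2 ω + (-(b / √3)) * Z3 ω := by
      ext ω; ring
    rw [e, this]
    congr 2
    have : (b / √3) ^ 2 = b ^ 2 / 3 := by rw [div_pow, sq_sqrt (by norm_num)]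
    linear_combination 6 * this)
  have hmax : P₂.map (fun ω => max (Z1 ω) (max (Z2 ω) (Z3 ω))) =
      ((gaussianReal 0 2).prod (gaussianReal 0 2)).map
        (fun p => max p.1 (max (-p.1 / 2 + √3 / 2 * p.2) (-p.1 / 2 - √3 / 2 * p.2))) := by
    rw [← hlaw, Measure.map_map (by fun_prop) (by fun_prop)]
    refine Measure.map_congr ?_
    filter_upwards [hsum] with ω hω
    have e : √3 / 2 * ((Z2 ω - Z3 ω) / √3) = (Z2 ω - Z3 ω) / 2 := by field_simp
    simp only [Function.comp_apply, e]
    congr 2 <;> linarith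
  have hRΘ := (indepFun_iff_map_prod_eq_prod_map_map hRm.aemeasurable hΘm.aemeasurable).1 hindep
  have hprod : P₁.map (fun ω => R ω * Real.cos (Θ ω)) =
      ((P₁.map R).prod (P₁.map Θ)).map (fun p => p.1 * Real.cos p.2) := by
    rw [← hRΘ, Measure.map_map (by fun_prop) (by fun_prop)]
    rfl
  have : SFinite (P₁.map Θ) := inferInstance
  refine Measure.ext fun s hs => ?_
  have hf : Measurable (s.indicator (1 : ℝ → ℝ≥0∞)) := measurable_one.indicator hs
  rw [hmax, hprod, ← lintegral_indicator_one hs, ← lintegral_indicator_one hs,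
    lintegral_map hf (by fun_prop), lintegral_map hf (by fun_prop), lint_gauss _ hf,
    lintegral_prod _ (by fun_prop), hR]
  have hd : Measurable (fun r : ℝ => if 0 < r then
      ENNReal.ofReal (1 / 2 * r * Real.exp (-r ^ 2 / 4)) else 0) :=
    Measurable.ite measurableSet_Ioi (by fun_prop) measurable_const
  rw [lintegral_withDensity_eq_lintegral_mul _ hd
    (Measurable.lintegral_prod_right' (f := fun p : ℝ × ℝ =>
      s.indicator (1 : ℝ → ℝ≥0∞) (p.1 * cos p.2)) (by fun_prop)),
    ← lintegral_indicator measurableSet_Ioi, hΘ]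
  refine lintegral_congr fun r => ?_
  by_cases hr : 0 < r
  · simp [hr]
  · simp [hr]
end
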